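/- arXiv:1807.06952 — 2 statements merged into one kernel-verified Lean document; each statement's English description precedes it below -/
import Mathlib

section
/- Let ψ : ℝ → ℝ be a C¹ function that is π-periodic. Then (1/2π)∫_{−π}^{π} ψ² dx − ((1/2π)∫_{−π}^{π} ψ dx)² ≤ (1/8π)∫_{−π}^{π} (ψ')² dx. -/
open Real

/-! Wirtinger's inequality on an interval `[a, b]` bounds the variance of a function with equal
endpoint values by `((b - a) / 2π)²` times the mean square of its derivative: by Parseval both sides
are sums over the Fourier modes of the interval, the variance omits the constant mode, and
differentiation multiplies the `n`-th coefficient by `2πin / (b - a)`. The constant is governed by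
the length of the interval, so a `π`-periodic function should be expanded on a single period, of
length `π`, which gives `1/4`; averages over `[-π, π]` agree with averages over one period. -/

open MeasureTheory Set Function

section Interval

variable {a b : ℝ}

lemma fourierCoeffOn_zero_eq_intervalAverage {E : Type*} [NormedAddCommGroup E] [NormedSpace ℂ E]
    (hab : a < b) (f : ℝ → E) : fourierCoeffOn hab f 0 = ⨍ x in a..b, f x := by
  simp [fourierCoeffOn_eq_integral, interval_average_eq]

theorem fourierCoeffOn_of_hasDerivAt_of_endpoints_eq (hab : a < b) {f f' : ℝ → ℂ}
    (hf : ContinuousOn f (Icc a b)) (hderiv : ∀ x ∈ Ioo a b, HasDerivAt f (f' x) x)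
    (hf' : IntervalIntegrable f' volume a b) (hends : f a = f b) (n : ℤ) :
    fourierCoeffOn hab f' n = 2 * π * Complex.I * n / (b - a) * fourierCoeffOn hab f n := by
  rcases eq_or_ne n 0 with rfl | hn
  · have hint : ∫ x in a..b, f' x = 0 := by
      rw [intervalIntegral.integral_eq_sub_of_hasDerivAt_of_le hab.le hf hderiv hf', hends,
        sub_self]
    simp [fourierCoeffOn_zero_eq_intervalAverage, interval_average_eq, hint]
  · have hba : (b - a : ℂ) ≠ 0 := by exact_mod_cast (sub_pos.2 hab).ne'
    have hnC : (n : ℂ) ≠ 0 := by exact_mod_cast hn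
    have ibp := fourierCoeffOn_of_hasDerivAt_Ioo (f := f) (f' := f') hab hn
      (by rwa [uIcc_of_le hab.le]) (by rwa [min_eq_left hab.le, max_eq_right hab.le]) hf'
    rw [ibp, hends]
    field_simp
    ring

lemma memLp_restrict_Ioc_of_continuousOn {E : Type*} [NormedAddCommGroup E] {f : ℝ → E}
    (hf : ContinuousOn f (Icc a b)) (p : ENNReal) : MemLp f p (volume.restrict (Ioc a b)) := by
  obtain ⟨C, hC⟩ := isCompact_Icc.exists_bound_of_continuousOn hf
  refine .of_bound ((hf.mono Ioc_subset_Icc_self).aestronglyMeasurable measurableSet_Ioc) C ?_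
  exact (ae_restrict_mem measurableSet_Ioc).mono fun x hx ↦ hC x (Ioc_subset_Icc_self hx)

theorem wirtinger_inequality_complex (hab : a < b) {f f' : ℝ → ℂ}
    (hf : ContinuousOn f (Icc a b)) (hderiv : ∀ x ∈ Ioo a b, HasDerivAt f (f' x) x)
    (hf' : MemLp f' 2 (volume.restrict (Ioc a b))) (hends : f a = f b) :
    (⨍ x in a..b, ‖f x‖ ^ 2) - ‖⨍ x in a..b, f x‖ ^ 2
      ≤ ((b - a) / (2 * π)) ^ 2 * ⨍ x in a..b, ‖f' x‖ ^ 2 := by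
  have hba : 0 < b - a := sub_pos.2 hab
  have hint : IntervalIntegrable f' volume a b :=
    (intervalIntegrable_iff_integrableOn_Ioc_of_le hab.le).2 (hf'.integrable one_le_two)
  have norm_coeff (n : ℤ) : ((b - a) / (2 * π)) ^ 2 * ‖fourierCoeffOn hab f' n‖ ^ 2
      = n ^ 2 * ‖fourierCoeffOn hab f n‖ ^ 2 := by
    rw [fourierCoeffOn_of_hasDerivAt_of_endpoints_eq hab hf hderiv hint hends, norm_mul, norm_div,
      ← Complex.ofReal_sub, Complex.norm_of_nonneg hba.le]
    simp only [norm_mul, Complex.norm_ofNat, Complex.norm_real, norm_of_nonneg pi_pos.le,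
      Complex.norm_I, Complex.norm_intCast]
    field_simp
    rw [sq_abs, mul_comm]
  have parseval {g : ℝ → ℂ} (hg : MemLp g 2 (volume.restrict (Ioc a b))) :
      HasSum (fun n ↦ ‖fourierCoeffOn hab g n‖ ^ 2) (⨍ x in a..b, ‖g x‖ ^ 2) := by
    simpa only [interval_average_eq] using hasSum_sq_fourierCoeffOn hab hg
  have parseval_f := parseval (memLp_restrict_Ioc_of_continuousOn hf 2)
  have parseval_f' := (parseval hf').mul_left (((b - a) / (2 * π)) ^ 2)
  have mode_zero := hasSum_ite_eq (0 : ℤ) (‖⨍ x in a..b, f x‖ ^ 2)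
  refine sub_le_iff_le_add.2 (hasSum_le (fun n ↦ ?_) parseval_f (parseval_f'.add mode_zero))
  rw [norm_coeff]
  rcases eq_or_ne n 0 with rfl | hn
  · simp [fourierCoeffOn_zero_eq_intervalAverage]
  · have one_le_sq : (1 : ℝ) ≤ (n : ℝ) ^ 2 := by
      exact_mod_cast (one_le_sq_iff_one_le_abs n).2 (Int.one_le_abs hn)
    simpa [hn] using le_mul_of_one_le_left (sq_nonneg ‖fourierCoeffOn hab f n‖) one_le_sq

theorem wirtinger_inequality_real (hab : a < b) {f f' : ℝ → ℝ}
    (hf : ContinuousOn f (Icc a b)) (hderiv : ∀ x ∈ Ioo a b, HasDerivAt f (f' x) x)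
    (hf' : MemLp f' 2 (volume.restrict (Ioc a b))) (hends : f a = f b) :
    (⨍ x in a..b, f x ^ 2) - (⨍ x in a..b, f x) ^ 2
      ≤ ((b - a) / (2 * π)) ^ 2 * ⨍ x in a..b, f' x ^ 2 := by
  have average_ofReal : ⨍ x in a..b, (f x : ℂ) = ((⨍ x in a..b, f x : ℝ) : ℂ) := by
    simp [interval_average_eq, intervalIntegral.integral_ofReal]
  simpa [average_ofReal] using wirtinger_inequality_complex hab
    (Complex.continuous_ofReal.comp_continuousOn hf)
    (fun x hx ↦ (hderiv x hx).ofReal_comp) hf'.ofReal (congrArg Complex.ofReal hends)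

end Interval

lemma intervalAverage_sub_const {E : Type*} [NormedAddCommGroup E] [NormedSpace ℝ E]
    [CompleteSpace E] {a b : ℝ} (hab : a ≠ b) {f : ℝ → E}
    (hf : IntervalIntegrable f volume a b) (c : E) :
    ⨍ x in a..b, (f x - c) = (⨍ x in a..b, f x) - c := by
  have hba : b - a ≠ 0 := sub_ne_zero.2 hab.symm
  simp [interval_average_eq, intervalIntegral.integral_sub hf, smul_sub, smul_smul, hba]

section Periodic

variable {E : Type*} [NormedAddCommGroup E] [NormedSpace ℝ E] {T : ℝ}

lemma intervalAverage_add_zsmul_of_periodic {f : ℝ → E} (hf : Periodic f T)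
    (hT : T ≠ 0) {a : ℝ} (hint : IntervalIntegrable f volume a (a + T)) {n : ℤ} (hn : n ≠ 0) :
    ⨍ x in a..(a + n • T), f x = ⨍ x in a..(a + T), f x := by
  have hnR : (n : ℝ) ≠ 0 := by exact_mod_cast hn
  rw [interval_average_eq, interval_average_eq, hf.intervalIntegral_add_zsmul_eq n a
    (hf.intervalIntegrable hT hint), ← Int.cast_smul_eq_zsmul ℝ n (∫ x in a..a + T, f x),
    smul_smul, add_sub_cancel_left, add_sub_cancel_left, zsmul_eq_mul]
  congr 1
  field_simp

lemma periodic_of_forall_hasDerivAt {f f' : ℝ → E} (hf : Periodic f T)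
    (hderiv : ∀ x, HasDerivAt f (f' x) x) : Periodic f' T := fun x ↦ by
  have hshift := (hderiv (x + T)).comp_add_const x T
  rw [hf.funext] at hshift
  exact hshift.unique (hderiv x)

end Periodic

/-- In `∫ x in a..b, u x - c` the integral extends over the whole difference, so this is the shape
of the left-hand side of `stmt_14`; `intervalAverage_sub_const` turns it into the variance. -/
theorem stmt_14_general {f f' : ℝ → ℝ} {T a b : ℝ} (hT : 0 < T) (hper : Periodic f T)
    (hderiv : ∀ x, HasDerivAt f (f' x) x) (hf' : MemLp f' 2 (volume.restrict (Ioc a (a + T))))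
    {n : ℤ} (hn : n ≠ 0) (hb : b = a + n • T) :
    ⨍ x in a..b, (f x ^ 2 - (⨍ y in a..b, f y) ^ 2)
      ≤ (T / (2 * π)) ^ 2 * ⨍ x in a..b, f' x ^ 2 := by
  have hf : Continuous f := continuous_iff_continuousAt.2 fun x ↦ (hderiv x).continuousAt
  have hper' : Periodic f' T := periodic_of_forall_hasDerivAt hper hderiv
  have hint' : IntervalIntegrable (fun x ↦ f' x ^ 2) volume a (a + T) :=
    (intervalIntegrable_iff_integrableOn_Ioc_of_le (by linarith)).2 hf'.integrable_sq
  have hsq : Continuous fun x ↦ f x ^ 2 := by fun_prop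
  have hab : a ≠ b := by simp [hb, hn, hT.ne']
  rw [intervalAverage_sub_const hab (hsq.intervalIntegrable _ _), hb,
    intervalAverage_add_zsmul_of_periodic (fun x ↦ by simp only [hper x]) hT.ne'
      (hsq.intervalIntegrable _ _) hn,
    intervalAverage_add_zsmul_of_periodic hper hT.ne' (hf.intervalIntegrable _ _) hn,
    intervalAverage_add_zsmul_of_periodic (fun x ↦ by simp only [hper' x]) hT.ne' hint' hn]
  simpa only [add_sub_cancel_left] using wirtinger_inequality_real (lt_add_of_pos_right a hT)
    hf.continuousOn (fun x _ ↦ hderiv x) hf' (hper a).symm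

/-- Improved Wirtinger inequality for π-periodic C¹ functions:
`(1/2π)∫ψ² − ((1/2π)∫ψ)² ≤ (1/8π)∫(ψ')²`. -/
theorem stmt_14 (ψ : ℝ → ℝ) (hψ : ContDiff ℝ 1 ψ)
    (hper : ∀ x, ψ (x + π) = ψ x) :
    (1 / (2 * π)) * ∫ x in (-π)..π, ψ x ^ 2
        - ((1 / (2 * π)) * ∫ x in (-π)..π, ψ x) ^ 2
      ≤ (1 / (8 * π)) * ∫ x in (-π)..π, (deriv ψ x) ^ 2 := by
  have mean_eq (g : ℝ → ℝ) : 1 / (2 * π) * ∫ x in (-π)..π, g x = ⨍ x in (-π)..π, g x := by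
    rw [interval_average_eq_div]
    ring
  have rhs_eq : 1 / (8 * π) * ∫ x in (-π)..π, deriv ψ x ^ 2
      = (π / (2 * π)) ^ 2 * ⨍ x in (-π)..π, deriv ψ x ^ 2 := by
    rw [← mean_eq]
    field_simp
    ring
  simp only [mean_eq, rhs_eq]
  exact stmt_14_general pi_pos hper (fun x ↦ (hψ.differentiable one_ne_zero x).hasDerivAt)
    (memLp_restrict_Ioc_of_continuousOn (hψ.continuous_deriv le_rfl).continuousOn 2)
    (two_ne_zero : (2 : ℤ) ≠ 0) (by rw [two_zsmul]; ring)
end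

section
/- For the standard Gaussian measure γ on ℝⁿ and a convex body K with Gaussian barycenter at the origin (∫_K x dγ(x) = 0), the following holds: ∫_K |x|⁴ dγ − (1/γ(K))(∫_K |x|² dγ)² − 2∫_K |x|² dγ ≤ 0. -/
open MeasureTheory

/-!
Let `μ` be the standard Gaussian measure tilted by `e^{-W}`, with `W` smooth, convex and Lipschitz,
and let `L = -Δ + ⟨x + ∇W, ∇⟩` be the generator of its Dirichlet form. By Bochner's formula and the
convexity of `W`, `‖L p‖² ≥ ∑ᵢⱼ ‖∂ᵢ∂ⱼ p‖² + ∑ᵢ ‖∂ᵢ p‖²` for polynomials `p`. For `W = 0` the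
operator `L` is triangular with respect to the degree, so `l + L` maps the polynomials onto
themselves for `l > 0`; the bounded drift `∇W` is a small perturbation of it for large `l`, so
`l + L` still has dense range. Hence a function orthogonal to the range of `L` has zero weak
gradient and is constant: `L p` approximates every centered function. Duality (Hörmander's `L²`
method), applied first to `∂ᵢ q` and then to `q`, gives
`Var q ≤ ½ ∑ᵢ (‖∂ᵢ q‖² + (∫ ∂ᵢ q)²)`. Letting `W` run through smoothed multiples of the distance to
`K` transfers this to the Gaussian conditioned on `K`. For `q = |x|²` the barycenter condition says
that `∂ᵢ q = 2 xᵢ` has mean zero, so that `Var |x|² ≤ 2 ∫ |x|²`.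
-/

open scoped InnerProductSpace

section HilbertSpace

variable {E P : Type*} [NormedAddCommGroup E] [InnerProductSpace ℝ E]

theorem norm_sq_le_of_mem_closure_range (T : P → E) {f : E} (hf : f ∈ closure (Set.range T))
    {C : ℝ} (hT : ∀ p, 2 * ⟪f, T p⟫_ℝ - ‖T p‖ ^ 2 ≤ C) : ‖f‖ ^ 2 ≤ C := by
  have hclosed : IsClosed {v : E | 2 * ⟪f, v⟫_ℝ - ‖v‖ ^ 2 ≤ C} :=
    isClosed_le (by fun_prop) (by fun_prop)
  have hmem := hclosed.closure_subset_iff.2 (Set.range_subset_iff.2 hT) hf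
  rw [Set.mem_ofPred_eq, real_inner_self_eq_norm_sq] at hmem
  linarith

variable [AddCommGroup P] [Module ℝ P]

theorem mem_closure_range_of_forall_orthogonal [CompleteSpace E] (T : P →ₗ[ℝ] E) {f : E}
    (hf : ∀ g, (∀ p, ⟪T p, g⟫_ℝ = 0) → ⟪f, g⟫_ℝ = 0) : f ∈ closure (Set.range T) := by
  have hmem : f ∈ (LinearMap.range T)ᗮᗮ := by
    refine (Submodule.mem_orthogonal' _ _).2 fun g hg => hf g fun p => ?_
    exact (Submodule.mem_orthogonal _ _).1 hg _ ⟨p, rfl⟩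
  rw [Submodule.orthogonal_orthogonal_eq_closure] at hmem
  exact hmem

theorem denseRange_of_forall_orthogonal_eq_zero [CompleteSpace E] (T : P →ₗ[ℝ] E)
    (hT : ∀ g, (∀ p, ⟪T p, g⟫_ℝ = 0) → g = 0) : DenseRange T := fun f =>
  mem_closure_range_of_forall_orthogonal T fun g hg => by rw [hT g hg, inner_zero_right]

theorem denseRange_add_of_norm_le [CompleteSpace E] (T S : P →ₗ[ℝ] E) (hT : DenseRange T)
    {c : ℝ} (hc : c < 1) (hS : ∀ p, ‖S p‖ ≤ c * ‖T p‖) : DenseRange (T + S) := by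
  refine denseRange_of_forall_orthogonal_eq_zero _ fun g hg => ?_
  have hrange (p : P) : |⟪T p, g⟫_ℝ| ≤ c * ‖T p‖ * ‖g‖ := by
    have hp : ⟪T p, g⟫_ℝ = -⟪S p, g⟫_ℝ := by
      rw [eq_neg_iff_add_eq_zero, ← inner_add_left, ← LinearMap.add_apply, hg]
    rw [hp, abs_neg]
    exact (abs_real_inner_le_norm _ _).trans (by gcongr; exact hS p)
  have hg_le : |⟪g, g⟫_ℝ| ≤ c * ‖g‖ * ‖g‖ :=
    hT.induction_on (p := fun v => |⟪v, g⟫_ℝ| ≤ c * ‖v‖ * ‖g‖) g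
      (isClosed_le (by fun_prop) (by fun_prop)) hrange
  rw [real_inner_self_eq_norm_sq, abs_of_nonneg (by positivity)] at hg_le
  by_contra hne
  nlinarith [mul_pos (sub_pos.2 hc) (sq_pos_of_pos (norm_pos_iff.2 hne))]

variable {I : Type*} [Fintype I] {J L : P →ₗ[ℝ] E} {D : I → P →ₗ[ℝ] P}

theorem resolvent_energy_le (hL : ∀ p q, ⟪L p, J q⟫_ℝ = ∑ i, ⟪J (D i p), J (D i q)⟫_ℝ)
    {g : E} (hg : ∀ p, ⟪L p, g⟫_ℝ = 0) (l : ℝ) (p : P) :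
    l ^ 2 * ‖J p - g‖ ^ 2 + 2 * l * ∑ i, ‖J (D i p)‖ ^ 2 ≤ ‖(l • J + L) p - l • g‖ ^ 2 := by
  have henergy : ⟪J p - g, L p⟫_ℝ = ∑ i, ‖J (D i p)‖ ^ 2 := by
    rw [real_inner_comm, inner_sub_right, hL, hg, sub_zero]
    simp only [real_inner_self_eq_norm_sq]
  have hsplit : (l • J + L) p - l • g = l • (J p - g) + L p := by
    rw [LinearMap.add_apply, LinearMap.smul_apply, smul_sub]; abel
  rw [hsplit, norm_add_sq_real, inner_smul_left, henergy, norm_smul, mul_pow, Real.norm_eq_abs,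
    sq_abs]
  simp only [conj_trivial]
  nlinarith [sq_nonneg ‖L p‖]

/- Approximating `l • g` by `(l • J + L) p` forces `J p → g` and `J (D i p) → 0`: a vector
orthogonal to the range of `L` has zero weak gradient. -/
theorem exists_denseRange_smul_add_of_norm_sq_le [CompleteSpace E]
    (hL : ∀ p q, ⟪L p, J q⟫_ℝ = ∑ i, ⟪J (D i p), J (D i q)⟫_ℝ)
    (hdense : ∀ l : ℝ, 0 < l → DenseRange (l • J + L)) (S : P →ₗ[ℝ] E) (C : ℝ)
    (hS : ∀ p, ‖S p‖ ^ 2 ≤ C * ∑ i, ‖J (D i p)‖ ^ 2) :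
    ∃ l : ℝ, 0 < l ∧ DenseRange (l • J + L + S) := by
  refine ⟨2 * |C| + 1, by positivity, denseRange_add_of_norm_le _ S (hdense _ (by positivity))
    one_half_lt_one fun p => ?_⟩
  have henergy := resolvent_energy_le hL (g := 0) (by simp) (2 * |C| + 1) p
  rw [sub_zero, smul_zero, sub_zero] at henergy
  have hsum : 0 ≤ ∑ i, ‖J (D i p)‖ ^ 2 := by positivity
  rw [← sq_le_sq₀ (by positivity) (by positivity), mul_pow]
  nlinarith [hS p, mul_le_mul_of_nonneg_right (le_abs_self C) hsum,
    sq_nonneg ((2 * |C| + 1) * ‖J p‖)]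

theorem inner_eq_zero_of_orthogonal_range
    (hL : ∀ p q, ⟪L p, J q⟫_ℝ = ∑ i, ⟪J (D i p), J (D i q)⟫_ℝ)
    {l : ℝ} (hl : 0 < l) (hdense : DenseRange (l • J + L)) {g : E} (hg : ∀ p, ⟪L p, g⟫_ℝ = 0)
    (i : I) {φ ψ : E} (hadj : ∀ p, ⟪J p, φ⟫_ℝ = ⟪J (D i p), ψ⟫_ℝ) : ⟪g, φ⟫_ℝ = 0 := by
  have hbound (p : P) :
      |⟪g, φ⟫_ℝ| ≤ ‖(l • J + L) p - l • g‖ * (‖φ‖ / l + ‖ψ‖ / √(2 * l)) := by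
    set r := ‖(l • J + L) p - l • g‖
    have henergy := resolvent_energy_le hL hg l p
    have hsum := Finset.single_le_sum (f := fun i => ‖J (D i p)‖ ^ 2)
      (fun _ _ => by positivity) (Finset.mem_univ i)
    have hsum_nonneg : 0 ≤ ∑ i, ‖J (D i p)‖ ^ 2 := Finset.sum_nonneg fun _ _ => by positivity
    have hclose : ‖J p - g‖ ≤ r / l := by
      rw [le_div_iff₀ hl, ← sq_le_sq₀ (by positivity) (norm_nonneg _)]
      nlinarith [mul_nonneg hl.le hsum_nonneg]
    have hderiv : ‖J (D i p)‖ ≤ r / √(2 * l) := by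
      rw [le_div_iff₀ (by positivity), ← sq_le_sq₀ (by positivity) (norm_nonneg _), mul_pow,
        Real.sq_sqrt (by positivity)]
      nlinarith [sq_nonneg (l * ‖J p - g‖), mul_le_mul_of_nonneg_left hsum hl.le]
    have hsplit : ⟪g, φ⟫_ℝ = ⟪J (D i p), ψ⟫_ℝ - ⟪J p - g, φ⟫_ℝ := by
      rw [inner_sub_left, hadj]; ring
    calc |⟪g, φ⟫_ℝ| ≤ ‖J (D i p)‖ * ‖ψ‖ + ‖J p - g‖ * ‖φ‖ := by
          rw [hsplit]
          exact (abs_sub _ _).trans (add_le_add (abs_real_inner_le_norm _ _)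
            (abs_real_inner_le_norm _ _))
      _ ≤ r / √(2 * l) * ‖ψ‖ + r / l * ‖φ‖ := by gcongr
      _ = r * (‖φ‖ / l + ‖ψ‖ / √(2 * l)) := by ring
  have hzero := hdense.induction_on
    (p := fun v => |⟪g, φ⟫_ℝ| ≤ ‖v - l • g‖ * (‖φ‖ / l + ‖ψ‖ / √(2 * l))) (l • g)
    (isClosed_le (by fun_prop) (by fun_prop)) hbound
  rwa [sub_self, norm_zero, zero_mul, abs_nonpos_iff] at hzero

variable {κ : ℝ} {e : P}

theorem mul_norm_sq_le_sum_of_bochner (hκ : 0 < κ)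
    (hL : ∀ p q, ⟪L p, J q⟫_ℝ = ∑ i, ⟪J (D i p), J (D i q)⟫_ℝ)
    (hB : ∀ p, κ * ∑ i, ‖J (D i p)‖ ^ 2 ≤ ‖L p‖ ^ 2) {q : P}
    (hq : J q ∈ closure (Set.range L)) : κ * ‖J q‖ ^ 2 ≤ ∑ i, ‖J (D i q)‖ ^ 2 := by
  rw [← le_div_iff₀' hκ]
  refine norm_sq_le_of_mem_closure_range L hq fun p => ?_
  have hsum : ∑ i, (2 * ⟪J (D i p), J (D i q)⟫_ℝ - κ * ‖J (D i p)‖ ^ 2)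
      ≤ (∑ i, ‖J (D i q)‖ ^ 2) / κ := by
    rw [Finset.sum_div]
    refine Finset.sum_le_sum fun i _ => ?_
    have hsq := sq_nonneg ‖κ • J (D i p) - J (D i q)‖
    rw [norm_sub_sq_real, inner_smul_left, norm_smul, mul_pow, Real.norm_eq_abs, sq_abs] at hsq
    simp only [conj_trivial] at hsq
    rw [le_div_iff₀ hκ]
    nlinarith
  rw [Finset.sum_sub_distrib, ← Finset.mul_sum, ← Finset.mul_sum, ← hL, real_inner_comm] at hsum
  linarith [hB p]

theorem two_mul_inner_sub_le {a b u : E} (hu : ‖u‖ = 1) (hκ : 0 < κ) :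
    2 * ⟪a, b⟫_ℝ - κ * ‖a‖ ^ 2 - κ * (‖a‖ ^ 2 - ⟪a, u⟫_ℝ ^ 2)
      ≤ (‖b‖ ^ 2 + ⟪b, u⟫_ℝ ^ 2) / (2 * κ) := by
  have horth := sq_nonneg ‖(2 * κ) • (a - ⟪a, u⟫_ℝ • u) - (b - ⟪b, u⟫_ℝ • u)‖
  have hpar := sq_nonneg (κ * ⟪a, u⟫_ℝ - ⟪b, u⟫_ℝ)
  rw [← real_inner_self_eq_norm_sq] at horth
  simp only [inner_sub_left, inner_sub_right, inner_smul_left, inner_smul_right, conj_trivial,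
    real_inner_self_eq_norm_sq, hu, real_inner_comm a u, real_inner_comm b u,
    real_inner_comm a b] at horth
  rw [le_div_iff₀ (by positivity)]
  nlinarith

theorem norm_sub_inner_smul_sq {u : E} (hu : ‖u‖ = 1) (v : E) :
    ‖v - ⟪v, u⟫_ℝ • u‖ ^ 2 = ‖v‖ ^ 2 - ⟪v, u⟫_ℝ ^ 2 := by
  rw [norm_sub_sq_real, inner_smul_right, norm_smul, hu, mul_one, Real.norm_eq_abs, sq_abs]
  ring

theorem sub_inner_smul_mem_closure_range [CompleteSpace E] {u : E} (hu : ‖u‖ = 1)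
    (hker : ∀ g, (∀ p, ⟪L p, g⟫_ℝ = 0) → g = ⟪u, g⟫_ℝ • u) (v : E) :
    v - ⟪v, u⟫_ℝ • u ∈ closure (Set.range L) := by
  refine mem_closure_range_of_forall_orthogonal L fun g hg => ?_
  rw [hker g hg, inner_smul_right, inner_sub_left, inner_smul_left, real_inner_self_eq_norm_sq, hu,
    conj_trivial, one_pow, mul_one, sub_self, mul_zero]

theorem mul_norm_sq_sub_inner_sq_le_of_bochner [CompleteSpace E] (hκ : 0 < κ)
    (hL : ∀ p q, ⟪L p, J q⟫_ℝ = ∑ i, ⟪J (D i p), J (D i q)⟫_ℝ)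
    (hB : ∀ p, κ * ∑ i, ‖J (D i p)‖ ^ 2 ≤ ‖L p‖ ^ 2)
    (he : ‖J e‖ = 1) (hDe : ∀ i, D i e = 0)
    (hker : ∀ g, (∀ p, ⟪L p, g⟫_ℝ = 0) → g = ⟪J e, g⟫_ℝ • J e) (q : P) :
    κ * (‖J q‖ ^ 2 - ⟪J q, J e⟫_ℝ ^ 2) ≤ ∑ i, ‖J (D i q)‖ ^ 2 := by
  have hcenter : J (q - ⟪J q, J e⟫_ℝ • e) = J q - ⟪J q, J e⟫_ℝ • J e := by
    rw [map_sub, map_smul]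
  have hpoincare := mul_norm_sq_le_sum_of_bochner hκ hL hB
    (hcenter ▸ sub_inner_smul_mem_closure_range he hker (J q))
  simpa only [hcenter, norm_sub_inner_smul_sq he, map_sub, map_smul, hDe, smul_zero, map_zero,
    sub_zero] using hpoincare

theorem norm_sq_sub_inner_sq_le_of_bochner [CompleteSpace E] (hκ : 0 < κ)
    (hL : ∀ p q, ⟪L p, J q⟫_ℝ = ∑ i, ⟪J (D i p), J (D i q)⟫_ℝ)
    (hB : ∀ p, ∑ i, ∑ j, ‖J (D j (D i p))‖ ^ 2 + κ * ∑ i, ‖J (D i p)‖ ^ 2 ≤ ‖L p‖ ^ 2)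
    (he : ‖J e‖ = 1) (hDe : ∀ i, D i e = 0)
    (hker : ∀ g, (∀ p, ⟪L p, g⟫_ℝ = 0) → g = ⟪J e, g⟫_ℝ • J e) (q : P) :
    ‖J q‖ ^ 2 - ⟪J q, J e⟫_ℝ ^ 2
      ≤ (∑ i, (‖J (D i q)‖ ^ 2 + ⟪J (D i q), J e⟫_ℝ ^ 2)) / (2 * κ) := by
  have hpoincare := mul_norm_sq_sub_inner_sq_le_of_bochner hκ hL
    (fun p => (le_add_of_nonneg_left (by positivity)).trans (hB p)) he hDe hker
  rw [← norm_sub_inner_smul_sq he]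
  refine norm_sq_le_of_mem_closure_range L (sub_inner_smul_mem_closure_range he hker _) fun p => ?_
  have hsum : ∑ i, (2 * ⟪J (D i p), J (D i q)⟫_ℝ - κ * ‖J (D i p)‖ ^ 2
      - ∑ j, ‖J (D j (D i p))‖ ^ 2)
      ≤ (∑ i, (‖J (D i q)‖ ^ 2 + ⟪J (D i q), J e⟫_ℝ ^ 2)) / (2 * κ) := by
    rw [Finset.sum_div]
    refine Finset.sum_le_sum fun i _ => ?_
    linarith [two_mul_inner_sub_le (a := J (D i p)) (b := J (D i q)) he hκ, hpoincare (D i p)]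
  rw [Finset.sum_sub_distrib, Finset.sum_sub_distrib, ← Finset.mul_sum, ← Finset.mul_sum, ← hL]
    at hsum
  have hLe : ⟪L p, J e⟫_ℝ = 0 := by
    rw [hL]
    exact Finset.sum_eq_zero fun i _ => by rw [hDe, map_zero, inner_zero_right]
  rw [real_inner_comm, inner_sub_right, inner_smul_right, hLe]
  linarith [hB p]

end HilbertSpace

section ExponentialGrowth

variable {X : Type*} [NormedAddCommGroup X]

/-- The algebra of continuous real functions `f` with `f x = O(exp (c * ‖x‖))` for some `c`: they
are square integrable against every measure all of whose exponential moments are finite. -/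
def expGrowth (X : Type*) [NormedAddCommGroup X] : Subalgebra ℝ (X → ℝ) where
  carrier := {f | Continuous f ∧ ∃ c : ℝ, f =O[⊤] fun x => Real.exp (c * ‖x‖)}
  mul_mem' := by
    rintro f g ⟨hf, c, hfc⟩ ⟨hg, d, hgd⟩
    refine ⟨hf.mul hg, c + d, (hfc.mul hgd).congr_right fun x => ?_⟩
    rw [← Real.exp_add, ← add_mul]
  add_mem' := by
    rintro f g ⟨hf, c, hfc⟩ ⟨hg, d, hgd⟩
    have hmono {a b : ℝ} (hab : a ≤ b) :
        (fun x : X => Real.exp (a * ‖x‖)) =O[⊤] fun x => Real.exp (b * ‖x‖) :=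
      Asymptotics.isBigO_of_le _ fun x => by
        simp only [Real.norm_eq_abs, Real.abs_exp]
        gcongr
    exact ⟨hf.add hg, max c d,
      (hfc.trans (hmono (le_max_left c d))).add (hgd.trans (hmono (le_max_right c d)))⟩
  algebraMap_mem' r := ⟨continuous_const, 0, by
    simpa using Asymptotics.isBigO_const_const r (one_ne_zero' ℝ) ⊤⟩

namespace expGrowth

theorem mem_of_norm_le {f : X → ℝ} (hf : Continuous f) (C c : ℝ)
    (hfC : ∀ x, |f x| ≤ C * Real.exp (c * ‖x‖)) : f ∈ expGrowth X :=
  ⟨hf, c, Asymptotics.isBigO_top.2 ⟨C, fun x => by simpa using hfC x⟩⟩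

theorem mem_of_bounded {f : X → ℝ} (hf : Continuous f) {C : ℝ} (hC : ∀ x, |f x| ≤ C) :
    f ∈ expGrowth X :=
  mem_of_norm_le hf C 0 (by simpa using hC)

theorem exp_mem_of_lipschitzWith {f : X → ℝ} {B : NNReal} (hf : LipschitzWith B f) :
    (fun x => Real.exp (f x)) ∈ expGrowth X := by
  refine mem_of_norm_le (Real.continuous_exp.comp hf.continuous) (Real.exp (f 0)) B fun x => ?_
  rw [Real.abs_exp, ← Real.exp_add, Real.exp_le_exp]
  have hx := (le_abs_self _).trans (hf.dist_le_mul x 0)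
  rw [dist_zero_right] at hx
  linarith

theorem clm_mem [NormedSpace ℝ X] (L : StrongDual ℝ X) : ⇑L ∈ expGrowth X := by
  refine mem_of_norm_le L.continuous ‖L‖ 1 fun x => (L.le_opNorm x).trans ?_
  gcongr
  linarith [Real.add_one_le_exp (1 * ‖x‖)]

instance : FunLike (expGrowth X) X ℝ where
  coe f := f.1
  coe_injective := Subtype.val_injective

theorem coe_sum {κ : Type*} (s : Finset κ) (f : κ → expGrowth X) :
    ⇑(∑ k ∈ s, f k) = ∑ k ∈ s, ⇑(f k) :=
  map_sum (expGrowth X).val f s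

protected theorem continuous (f : expGrowth X) : Continuous f := f.2.1

end expGrowth

/-- All exponential moments `∫ exp (c * ‖x‖) ∂μ` are finite. -/
class HasExpMoments [MeasurableSpace X] (μ : Measure X) : Prop where
  integrable_exp (c : ℝ) : Integrable (fun x => Real.exp (c * ‖x‖)) μ

variable [MeasurableSpace X] [BorelSpace X]

instance HasExpMoments.isFiniteMeasure (μ : Measure X) [HasExpMoments μ] : IsFiniteMeasure μ := by
  have h := HasExpMoments.integrable_exp (μ := μ) 0
  simp only [zero_mul, Real.exp_zero] at h
  exact (integrable_const_iff.1 h).resolve_left one_ne_zero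

namespace expGrowth

theorem integrable (f : expGrowth X) (μ : Measure X) [HasExpMoments μ] :
    Integrable f μ :=
  let ⟨c, hfc⟩ := f.2.2
  hfc.integrable (expGrowth.continuous f).aestronglyMeasurable (HasExpMoments.integrable_exp c)

theorem memLp_two (f : expGrowth X) (μ : Measure X) [HasExpMoments μ] : MemLp f 2 μ :=
  (memLp_two_iff_integrable_sq (expGrowth.continuous f).aestronglyMeasurable).2
    (integrable (f ^ 2) μ)

/-- The class in `L²(μ)` of a continuous function of exponential growth. -/
noncomputable def toL2 (μ : Measure X) [HasExpMoments μ] : expGrowth X →ₗ[ℝ] Lp ℝ 2 μ where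
  toFun f := (memLp_two f μ).toLp f
  map_add' _ _ := rfl
  map_smul' _ _ := rfl

variable {μ : Measure X} [HasExpMoments μ]

theorem coeFn_toL2 (f : expGrowth X) : toL2 μ f =ᵐ[μ] f :=
  MemLp.coeFn_toLp (memLp_two f μ)

theorem inner_toL2_left (f : expGrowth X) (g : Lp ℝ 2 μ) :
    ⟪toL2 μ f, g⟫_ℝ = ∫ x, f x * g x ∂μ := by
  rw [L2.inner_def]
  refine integral_congr_ae ?_
  filter_upwards [coeFn_toL2 (μ := μ) f] with x hx
  rw [hx, real_inner_eq_re_inner, RCLike.inner_apply, conj_trivial, mul_comm]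
  rfl

theorem inner_toL2 (f g : expGrowth X) :
    ⟪toL2 μ f, toL2 μ g⟫_ℝ = ∫ x, (f * g) x ∂μ := by
  rw [inner_toL2_left]
  refine integral_congr_ae ?_
  filter_upwards [coeFn_toL2 (μ := μ) g] with x hx
  rw [hx]
  rfl

theorem inner_toL2_mul_left (f g h : expGrowth X) :
    ⟪toL2 μ (f * g), toL2 μ h⟫_ℝ = ⟪toL2 μ g, toL2 μ (f * h)⟫_ℝ := by
  rw [inner_toL2, inner_toL2, mul_assoc, mul_left_comm]

theorem inner_toL2_one_right (f : expGrowth X) : ⟪toL2 μ f, toL2 μ 1⟫_ℝ = ∫ x, f x ∂μ := by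
  rw [inner_toL2, mul_one]

theorem norm_toL2_sq (f : expGrowth X) : ‖toL2 μ f‖ ^ 2 = ∫ x, f x ^ 2 ∂μ := by
  rw [← real_inner_self_eq_norm_sq, inner_toL2, ← sq]
  rfl

end expGrowth

end ExponentialGrowth

section MomentDeterminacy

variable {X : Type*} [NormedAddCommGroup X] [NormedSpace ℝ X] [MeasurableSpace X] [BorelSpace X]

theorem ae_eq_zero_of_integral_mul_cexp_eq_zero [CompleteSpace X] [SecondCountableTopology X]
    {μ : Measure X} {h : X → ℝ} (hh : Integrable h μ)
    (hchar : ∀ L : StrongDual ℝ X, ∫ x, (h x : ℂ) * Complex.exp (L x * Complex.I) ∂μ = 0) :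
    h =ᵐ[μ] 0 := by
  have hfin₁ := isFiniteMeasure_withDensity_ofReal hh.2
  have hfin₂ := isFiniteMeasure_withDensity_ofReal hh.neg.2
  have hmeas : AEMeasurable (fun x => ENNReal.ofReal (h x)) μ := hh.1.aemeasurable.ennreal_ofReal
  have hmeas_neg : AEMeasurable (fun x => ENNReal.ofReal ((-h) x)) μ :=
    hh.neg.1.aemeasurable.ennreal_ofReal
  have heq : μ.withDensity (fun x => ENNReal.ofReal (h x))
      = μ.withDensity fun x => ENNReal.ofReal ((-h) x) := by
    refine Measure.ext_of_charFunDual (funext fun L => ?_)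
    have hint {u : X → ℝ} (hu : Integrable u μ) :
        Integrable (fun x => u x • Complex.exp (L x * Complex.I)) μ :=
      hu.smul_of_top_left (memLp_top_of_bound (Continuous.aestronglyMeasurable (by fun_prop)) 1
        (.of_forall fun x => (Complex.norm_exp_ofReal_mul_I _).le))
    rw [charFunDual_apply, charFunDual_apply,
      integral_withDensity_eq_integral_toReal_smul₀ hmeas (by simp),
      integral_withDensity_eq_integral_toReal_smul₀ hmeas_neg (by simp), ← sub_eq_zero,
      ← integral_sub, ← hchar L]
    · refine integral_congr_ae (.of_forall fun x => ?_)
      simp only [ENNReal.toReal_ofReal', Pi.neg_apply, ← sub_smul, max_zero_sub_eq_self]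
      rfl
    · simp only [ENNReal.toReal_ofReal']
      exact hint hh.pos_part
    · simp only [ENNReal.toReal_ofReal']
      exact hint hh.neg.pos_part
  have hae := (withDensity_eq_iff hmeas hmeas_neg hh.lintegral_lt_top.ne).1 heq
  filter_upwards [hae] with x hx
  have hx' := congrArg ENNReal.toReal hx
  simp only [Pi.neg_apply, ENNReal.toReal_ofReal'] at hx'
  have := max_zero_sub_eq_self (h x)
  rw [Pi.zero_apply]
  linarith

theorem integral_mul_cexp_eq_zero_of_integral_mul_pow_eq_zero {μ : Measure X} {h : X → ℝ}
    (hh : AEStronglyMeasurable h μ) (L : StrongDual ℝ X)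
    (hexp : Integrable (fun x => h x * Real.exp |L x|) μ)
    (hpow : ∀ k : ℕ, ∫ x, h x * L x ^ k ∂μ = 0) :
    ∫ x, (h x : ℂ) * Complex.exp (L x * Complex.I) ∂μ = 0 := by
  have hseries := hasSum_integral_of_dominated_convergence (μ := μ)
    (F := fun (k : ℕ) x => (h x : ℂ) * ((L x * Complex.I) ^ k / (k.factorial : ℂ)))
    (f := fun x => (h x : ℂ) * Complex.exp (L x * Complex.I))
    (fun k x => |h x| * (|L x| ^ k / k.factorial))
    (fun k => (Complex.continuous_ofReal.comp_aestronglyMeasurable hh).mul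
      (Continuous.aestronglyMeasurable (by fun_prop)))
    (fun k => .of_forall fun x => by simp)
    (.of_forall fun x => (Real.summable_pow_div_factorial |L x|).mul_left _)
    (hexp.abs.congr (.of_forall fun x => by
      beta_reduce
      rw [abs_mul, Real.abs_exp, tsum_mul_left, Real.exp_eq_exp_ℝ, NormedSpace.exp_eq_tsum_div]))
    (.of_forall fun x => (Complex.exp_eq_exp_ℂ ▸
      NormedSpace.expSeries_div_hasSum_exp (L x * Complex.I)).mul_left (h x : ℂ))
  have hterm (k : ℕ) :
      ∫ x, (h x : ℂ) * ((L x * Complex.I) ^ k / (k.factorial : ℂ)) ∂μ = 0 := by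
    have hfactor (x : X) : (h x : ℂ) * ((L x * Complex.I) ^ k / (k.factorial : ℂ))
        = ((h x * L x ^ k : ℝ) : ℂ) * (Complex.I ^ k / (k.factorial : ℂ)) := by
      push_cast; ring
    simp_rw [hfactor]
    rw [integral_mul_const, integral_complex_ofReal, hpow, Complex.ofReal_zero, zero_mul]
  simp only [hterm] at hseries
  exact hseries.unique hasSum_zero

end MomentDeterminacy

section PartialDerivatives

variable {ι : Type*} [DecidableEq ι]

/-- `f'` is the `i`-th partial derivative of `f`, at every point. -/
def HasPartialDeriv (i : ι) (f f' : (ι → ℝ) → ℝ) : Prop :=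
  ∀ x, HasLineDerivAt ℝ f (f' x) x (Pi.single i 1)

namespace HasPartialDeriv

variable {i : ι} {f f' g g' : (ι → ℝ) → ℝ}

theorem add (hf : HasPartialDeriv i f f') (hg : HasPartialDeriv i g g') :
    HasPartialDeriv i (f + g) (f' + g') := fun x => HasDerivAt.add (hf x) (hg x)

theorem sub (hf : HasPartialDeriv i f f') (hg : HasPartialDeriv i g g') :
    HasPartialDeriv i (f - g) (f' - g') := fun x => HasDerivAt.sub (hf x) (hg x)

theorem mul (hf : HasPartialDeriv i f f') (hg : HasPartialDeriv i g g') :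
    HasPartialDeriv i (f * g) (f' * g + f * g') := fun x => by
  have h := HasDerivAt.mul (hf x) (hg x)
  rwa [zero_smul, add_zero] at h

theorem exp (hf : HasPartialDeriv i f f') :
    HasPartialDeriv i (fun x => Real.exp (f x)) (fun x => f' x * Real.exp (f x)) := fun x => by
  have h := HasDerivAt.exp (hf x)
  rwa [zero_smul, add_zero, mul_comm] at h

theorem sum {κ : Type*} {s : Finset κ} {f f' : κ → (ι → ℝ) → ℝ}
    (hf : ∀ k ∈ s, HasPartialDeriv i (f k) (f' k)) :
    HasPartialDeriv i (∑ k ∈ s, f k) (∑ k ∈ s, f' k) := fun x => by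
  simpa only [HasLineDerivAt, Finset.sum_apply] using
    HasDerivAt.fun_sum fun k hk => hf k hk x

end HasPartialDeriv

theorem hasPartialDeriv_const (i : ι) (c : ℝ) : HasPartialDeriv i (fun _ => c) 0 := fun _ =>
  hasDerivAt_const _ _

theorem hasPartialDeriv_coord (i j : ι) :
    HasPartialDeriv i (fun x => x j) fun _ => (Pi.single i 1 : ι → ℝ) j := fun x => by
  simpa [HasLineDerivAt] using
    ((hasDerivAt_id (0 : ℝ)).mul_const ((Pi.single i 1 : ι → ℝ) j)).const_add (x j)

end PartialDerivatives

section Polynomials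

open MvPolynomial

theorem pderiv_pderiv_comm {σ R : Type*} [CommRing R] (i j : σ) (p : MvPolynomial σ R) :
    pderiv i (pderiv j p) = pderiv j (pderiv i p) := by
  classical
  have hcomm : ⁅pderiv (R := R) i, pderiv j⁆ = 0 := derivation_ext fun k => by
    rw [Derivation.commutator_apply, pderiv_X, pderiv_X, Pi.single_apply, Pi.single_apply]
    split_ifs <;> simp
  rw [← sub_eq_zero, ← Derivation.commutator_apply, hcomm, Derivation.zero_apply]

theorem pderiv_sum_X_sq {σ R : Type*} [Fintype σ] [CommSemiring R] (i : σ) :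
    pderiv i (∑ j, X j ^ 2 : MvPolynomial σ R) = C 2 * X i := by
  rw [map_sum, Finset.sum_eq_single_of_mem i (Finset.mem_univ i) fun j _ hji => by
    rw [pderiv_pow, pderiv_X_of_ne hji, mul_zero],
    pderiv_pow, pderiv_X_self, mul_one, pow_one, Nat.cast_two, map_ofNat]

variable {ι : Type*} [Fintype ι]

/-- Polynomials as functions on `ι → ℝ` of exponential growth. -/
noncomputable def polyFun : MvPolynomial ι ℝ →ₐ[ℝ] expGrowth (ι → ℝ) :=
  aeval fun i => ⟨ContinuousLinearMap.proj (R := ℝ) i, expGrowth.clm_mem _⟩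

theorem polyFun_apply (p : MvPolynomial ι ℝ) (x : ι → ℝ) : polyFun p x = eval x p := by
  induction p using MvPolynomial.induction_on with
  | C a => rw [polyFun, aeval_C, eval_C]; rfl
  | add p q hp hq => rw [map_add, map_add, ← hp, ← hq]; rfl
  | mul_X p i hp => rw [map_mul, map_mul, ← hp, polyFun, aeval_X, eval_X]; rfl

theorem hasPartialDeriv_polyFun [DecidableEq ι] (i : ι) (p : MvPolynomial ι ℝ) :
    HasPartialDeriv i (polyFun p) (polyFun (pderiv i p)) := by
  induction p using MvPolynomial.induction_on with
  | C a =>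
    rw [pderiv_C, map_zero, polyFun, aeval_C]
    exact hasPartialDeriv_const i a
  | add p q hp hq =>
    rw [map_add, map_add, map_add]
    exact hp.add hq
  | mul_X p j hp =>
    have hX : HasPartialDeriv i (polyFun (X j)) (polyFun (pderiv i (X j))) := by
      convert hasPartialDeriv_coord i j with x x
      · rw [polyFun_apply, eval_X]
      · rw [polyFun_apply, pderiv_X, Pi.single_apply, Pi.single_apply, apply_ite (eval x)]
        simp [eq_comm]
    rw [pderiv_mul, map_add, map_mul, map_mul, map_mul]
    exact hp.mul hX

end Polynomials

section Generator

open MvPolynomial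

variable {ι : Type*} [Fintype ι]

/-- The generator `p ↦ ∑ i, (b i * ∂ᵢ p - ∂ᵢ² p)` of the diffusion with drift `-b`, acting on
polynomials. -/
noncomputable def diffusionGenerator (b : ι → expGrowth (ι → ℝ)) :
    MvPolynomial ι ℝ →ₗ[ℝ] expGrowth (ι → ℝ) :=
  ∑ i, (LinearMap.mulLeft ℝ (b i) ∘ₗ polyFun.toLinearMap ∘ₗ (pderiv i).toLinearMap
    - polyFun.toLinearMap ∘ₗ (pderiv i).toLinearMap ∘ₗ (pderiv i).toLinearMap)

theorem diffusionGenerator_apply (b : ι → expGrowth (ι → ℝ)) (p : MvPolynomial ι ℝ) :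
    diffusionGenerator b p
      = ∑ i, (b i * polyFun (pderiv i p) - polyFun (pderiv i (pderiv i p))) := by
  simp only [diffusionGenerator, LinearMap.sum_apply]
  rfl

/-- The class in `L²(μ)` of a polynomial function. -/
noncomputable def polyL2 (μ : Measure (ι → ℝ)) [HasExpMoments μ] :
    MvPolynomial ι ℝ →ₗ[ℝ] Lp ℝ 2 μ :=
  expGrowth.toL2 μ ∘ₗ polyFun.toLinearMap

variable [DecidableEq ι]

/-- `b` is the gradient of `-log ρ`, where `ρ` is the density of `μ`, in the weak sense:
integration by parts against `μ` produces the factor `b`. -/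
def HasNegLogGradient (μ : Measure (ι → ℝ)) (b : ι → expGrowth (ι → ℝ)) : Prop :=
  ∀ (i : ι) (f f' : expGrowth (ι → ℝ)), HasPartialDeriv i f f' → ∫ x, f' x ∂μ = ∫ x, (b i * f) x ∂μ

namespace HasNegLogGradient

variable {μ : Measure (ι → ℝ)} [HasExpMoments μ] {b : ι → expGrowth (ι → ℝ)}

theorem inner_diffusionGenerator (hb : HasNegLogGradient μ b) (p : MvPolynomial ι ℝ)
    {g : expGrowth (ι → ℝ)} {g' : ι → expGrowth (ι → ℝ)} (hg : ∀ i, HasPartialDeriv i g (g' i)) :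
    ⟪expGrowth.toL2 μ (diffusionGenerator b p), expGrowth.toL2 μ g⟫_ℝ
      = ∑ i, ⟪polyL2 μ (pderiv i p), expGrowth.toL2 μ (g' i)⟫_ℝ := by
  have hparts (i : ι) :
      ⟪expGrowth.toL2 μ (b i * polyFun (pderiv i p)), expGrowth.toL2 μ g⟫_ℝ
        = ⟪polyL2 μ (pderiv i (pderiv i p)), expGrowth.toL2 μ g⟫_ℝ
          + ⟪polyL2 μ (pderiv i p), expGrowth.toL2 μ (g' i)⟫_ℝ := by
    have h := hb i (polyFun (pderiv i p) * g)
      (polyFun (pderiv i (pderiv i p)) * g + polyFun (pderiv i p) * g' i)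
      ((hasPartialDeriv_polyFun i _).mul (hg i))
    simp only [polyL2, LinearMap.comp_apply, AlgHom.toLinearMap_apply, expGrowth.inner_toL2]
    rw [mul_assoc, ← h]
    exact integral_add (expGrowth.integrable _ μ) (expGrowth.integrable _ μ)
  rw [diffusionGenerator_apply, map_sum, sum_inner]
  refine Finset.sum_congr rfl fun i _ => ?_
  rw [map_sub, inner_sub_left, hparts, sub_eq_iff_eq_add']
  rfl

end HasNegLogGradient

theorem hasPartialDeriv_diffusionGenerator {b : ι → expGrowth (ι → ℝ)}
    {H : ι → ι → expGrowth (ι → ℝ)} (hH : ∀ i j, HasPartialDeriv j (b i) (H i j)) (j : ι)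
    (p : MvPolynomial ι ℝ) :
    HasPartialDeriv j (diffusionGenerator b p)
      (diffusionGenerator b (pderiv j p) + ∑ i, H i j * polyFun (pderiv i p) : expGrowth _) := by
  have hsum : diffusionGenerator b (pderiv j p) + ∑ i, H i j * polyFun (pderiv i p)
      = ∑ i, (H i j * polyFun (pderiv i p) + b i * polyFun (pderiv j (pderiv i p))
          - polyFun (pderiv j (pderiv i (pderiv i p)))) := by
    rw [diffusionGenerator_apply, ← Finset.sum_add_distrib]
    refine Finset.sum_congr rfl fun i _ => ?_
    rw [pderiv_pderiv_comm j i, pderiv_pderiv_comm j i, pderiv_pderiv_comm j i]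
    ring
  rw [hsum, diffusionGenerator_apply, expGrowth.coe_sum, expGrowth.coe_sum]
  exact .sum fun i _ =>
    ((hH i j).mul (hasPartialDeriv_polyFun j _)).sub (hasPartialDeriv_polyFun j _)

namespace HasNegLogGradient

variable {μ : Measure (ι → ℝ)} [HasExpMoments μ] {b : ι → expGrowth (ι → ℝ)}

theorem inner_diffusionGenerator_polyL2 (hb : HasNegLogGradient μ b) (p q : MvPolynomial ι ℝ) :
    ⟪expGrowth.toL2 μ (diffusionGenerator b p), polyL2 μ q⟫_ℝ
      = ∑ i, ⟪polyL2 μ (pderiv i p), polyL2 μ (pderiv i q)⟫_ℝ :=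
  hb.inner_diffusionGenerator p fun i => hasPartialDeriv_polyFun i q

theorem norm_diffusionGenerator_sq (hb : HasNegLogGradient μ b) {H : ι → ι → expGrowth (ι → ℝ)}
    (hH : ∀ i j, HasPartialDeriv j (b i) (H i j)) (p : MvPolynomial ι ℝ) :
    ‖expGrowth.toL2 μ (diffusionGenerator b p)‖ ^ 2
      = ∑ i, ∑ j, ‖polyL2 μ (pderiv j (pderiv i p))‖ ^ 2
        + ∫ x, (∑ i, ∑ j, H j i * polyFun (pderiv j p) * polyFun (pderiv i p)) x ∂μ := by
  have hgrad (i : ι) : ⟪polyL2 μ (pderiv i p), expGrowth.toL2 μ (diffusionGenerator b (pderiv i p)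
      + ∑ j, H j i * polyFun (pderiv j p))⟫_ℝ = ∑ j, ‖polyL2 μ (pderiv j (pderiv i p))‖ ^ 2
        + ∑ j, ⟪polyL2 μ (pderiv i p), expGrowth.toL2 μ (H j i * polyFun (pderiv j p))⟫_ℝ := by
    rw [map_add, inner_add_right, map_sum, inner_sum, real_inner_comm,
      hb.inner_diffusionGenerator_polyL2]
    simp only [real_inner_self_eq_norm_sq]
  rw [← real_inner_self_eq_norm_sq,
    hb.inner_diffusionGenerator p fun i => hasPartialDeriv_diffusionGenerator hH i p]
  simp only [hgrad, Finset.sum_add_distrib, ← expGrowth.inner_toL2_one_right, map_sum, sum_inner]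
  congr! 3 with i _ j
  rw [expGrowth.inner_toL2_mul_left, mul_one]
  rfl

theorem bochner (hb : HasNegLogGradient μ b) {H : ι → ι → expGrowth (ι → ℝ)}
    (hH : ∀ i j, HasPartialDeriv j (b i) (H i j)) {κ : ℝ}
    (hκ : ∀ x (v : ι → ℝ), κ * ∑ i, v i ^ 2 ≤ ∑ i, ∑ j, H j i x * v j * v i)
    (p : MvPolynomial ι ℝ) :
    ∑ i, ∑ j, ‖polyL2 μ (pderiv j (pderiv i p))‖ ^ 2 + κ * ∑ i, ‖polyL2 μ (pderiv i p)‖ ^ 2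
      ≤ ‖expGrowth.toL2 μ (diffusionGenerator b p)‖ ^ 2 := by
  have hgrad : κ * ∑ i, ‖polyL2 μ (pderiv i p)‖ ^ 2
      = ∫ x, (κ • ∑ i, polyFun (pderiv i p) ^ 2) x ∂μ := by
    rw [← expGrowth.inner_toL2_one_right, map_smul, inner_smul_left, map_sum, sum_inner,
      conj_trivial]
    congr! 2 with i
    rw [expGrowth.inner_toL2_one_right]
    exact expGrowth.norm_toL2_sq _
  rw [hb.norm_diffusionGenerator_sq hH, hgrad]
  refine add_le_add le_rfl (integral_mono (expGrowth.integrable _ μ) (expGrowth.integrable _ μ)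
    fun x => ?_)
  have hsum_sq : (κ • ∑ i, polyFun (pderiv i p) ^ 2) x = κ * ∑ i, polyFun (pderiv i p) x ^ 2 :=
    congrArg (κ * ·) ((congrFun (expGrowth.coe_sum _ _) x).trans (Finset.sum_apply _ _ _))
  simp only [hsum_sq, expGrowth.coe_sum, Finset.sum_apply]
  exact hκ x fun i => polyFun (pderiv i p) x

end HasNegLogGradient

end Generator

section Completeness

open MvPolynomial

variable {ι : Type*} [Fintype ι]

theorem exists_polyFun_eq_clm (L : StrongDual ℝ (ι → ℝ)) :
    ∃ p : MvPolynomial ι ℝ, ⇑(polyFun p) = L := by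
  classical
  refine ⟨∑ i, C (L (Pi.single i 1)) * X i, funext fun x => ?_⟩
  rw [polyFun_apply, map_sum]
  conv_rhs => rw [← Finset.univ_sum_single x, map_sum]
  refine Finset.sum_congr rfl fun i _ => ?_
  rw [map_mul, eval_C, eval_X, mul_comm, ← smul_eq_mul, ← map_smul, ← Pi.single_smul, smul_eq_mul,
    mul_one]

theorem denseRange_toL2_mul_polyFun (μ : Measure (ι → ℝ)) [HasExpMoments μ]
    {w : expGrowth (ι → ℝ)} (hw : ∀ x, w x ≠ 0) :
    DenseRange (expGrowth.toL2 μ ∘ₗ LinearMap.mulLeft ℝ w ∘ₗ polyFun.toLinearMap) := by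
  refine denseRange_of_forall_orthogonal_eq_zero _ fun g hg => ?_
  have hint (f : expGrowth (ι → ℝ)) : Integrable (fun x => w x * g x * f x) μ :=
    ((expGrowth.memLp_two (w * f) μ).integrable_mul (Lp.memLp g)).congr
      (.of_forall fun x => mul_right_comm (w x) (f x) (g x))
  have hwg : Integrable (fun x => w x * g x) μ :=
    (hint 1).congr (.of_forall fun x => mul_one (w x * g x))
  have hpoly (p : MvPolynomial ι ℝ) : ∫ x, w x * g x * polyFun p x ∂μ = 0 := by
    rw [← hg p]
    refine Eq.trans (integral_congr_ae (.of_forall fun x => ?_))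
      (expGrowth.inner_toL2_left (w * polyFun p) g).symm
    exact mul_right_comm (w x) (g x) (polyFun p x)
  have hzero := ae_eq_zero_of_integral_mul_cexp_eq_zero hwg fun L =>
    integral_mul_cexp_eq_zero_of_integral_mul_pow_eq_zero hwg.1 L
      (hint ⟨_, expGrowth.exp_mem_of_lipschitzWith (lipschitzWith_one_norm.comp L.lipschitz)⟩)
      fun k => by
        obtain ⟨p, hp⟩ := exists_polyFun_eq_clm L
        rw [← hpoly (p ^ k), map_pow, ← hp]
        rfl
  refine (Lp.eq_zero_iff_ae_eq_zero).2 ?_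
  filter_upwards [hzero] with x hx
  exact (mul_eq_zero.1 hx).resolve_left (hw x)

theorem denseRange_polyL2 (μ : Measure (ι → ℝ)) [HasExpMoments μ] : DenseRange (polyL2 μ) := by
  have h := denseRange_toL2_mul_polyFun μ (w := 1) fun _ => one_ne_zero
  rwa [LinearMap.mulLeft_one, LinearMap.id_comp] at h

end Completeness

section OrnsteinUhlenbeck

open MvPolynomial

theorem pderiv_pderiv_monomial_mem_of_degree_lt {ι : Type*} {i : ι} {s : ι →₀ ℕ}
    {S : Submodule ℝ (MvPolynomial ι ℝ)}
    (hS : ∀ (t : ι →₀ ℕ) (c : ℝ), t.degree < s.degree → monomial t c ∈ S) (c : ℝ) :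
    pderiv i (pderiv i (monomial s c)) ∈ S := by
  rw [pderiv_monomial, pderiv_monomial]
  rcases eq_or_ne (s i) 0 with hi | hi
  · simp [hi]
  have hsingle : Finsupp.single i 1 ≤ s := Finsupp.single_le_iff.2 (Nat.one_le_iff_ne_zero.2 hi)
  have hdegree : (s - Finsupp.single i 1).degree + 1 = s.degree := by
    conv_rhs => rw [← tsub_add_cancel_of_le hsingle, map_add, Finsupp.degree_single]
  have hmono : (s - Finsupp.single i 1 - Finsupp.single i 1).degree
      ≤ (s - Finsupp.single i 1).degree := Finsupp.degree_mono tsub_le_self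
  exact hS _ _ (by omega)

variable {ι : Type*} [Fintype ι]

/-- The Ornstein–Uhlenbeck operator `p ↦ ∑ i, (xᵢ * ∂ᵢ p - ∂ᵢ² p)` on polynomials (with the sign
for which it is nonnegative). -/
noncomputable def ornsteinUhlenbeck : MvPolynomial ι ℝ →ₗ[ℝ] MvPolynomial ι ℝ :=
  ∑ i, (LinearMap.mulLeft ℝ (X i) ∘ₗ (pderiv i).toLinearMap
    - (pderiv i).toLinearMap ∘ₗ (pderiv i).toLinearMap)

theorem ornsteinUhlenbeck_apply (p : MvPolynomial ι ℝ) :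
    ornsteinUhlenbeck p = ∑ i, (X i * pderiv i p - pderiv i (pderiv i p)) := by
  simp only [ornsteinUhlenbeck, LinearMap.sum_apply]
  rfl

theorem ornsteinUhlenbeck_C (c : ℝ) : ornsteinUhlenbeck (C c : MvPolynomial ι ℝ) = 0 := by
  simp [ornsteinUhlenbeck_apply]

theorem diffusionGenerator_eq_ornsteinUhlenbeck :
    diffusionGenerator (fun i => polyFun (X i))
      = polyFun.toLinearMap ∘ₗ (ornsteinUhlenbeck (ι := ι)) := by
  refine LinearMap.ext fun p => ?_
  rw [diffusionGenerator_apply, LinearMap.comp_apply, AlgHom.toLinearMap_apply,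
    ornsteinUhlenbeck_apply, map_sum]
  simp only [map_sub, map_mul]

theorem ornsteinUhlenbeck_monomial (s : ι →₀ ℕ) (c : ℝ) :
    ornsteinUhlenbeck (monomial s c)
      = (s.degree : ℝ) • monomial s c - ∑ i, pderiv i (pderiv i (monomial s c)) := by
  rw [ornsteinUhlenbeck_apply, Finset.sum_sub_distrib, Finsupp.degree_eq_sum, Nat.cast_sum,
    Finset.sum_smul]
  simp only [X_mul_pderiv_monomial, Nat.cast_smul_eq_nsmul]

theorem exists_eq_smul_add_ornsteinUhlenbeck_add_C {l : ℝ} (hl : 0 ≤ l) (p : MvPolynomial ι ℝ) :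
    ∃ q c, p = l • q + ornsteinUhlenbeck q + C c := by
  set T : MvPolynomial ι ℝ →ₗ[ℝ] MvPolynomial ι ℝ := l • .id + ornsteinUhlenbeck with hT
  set S := LinearMap.range (T.coprod (Algebra.linearMap ℝ (MvPolynomial ι ℝ)))
  suffices hmonomial : ∀ (d : ℕ) (s : ι →₀ ℕ) (c : ℝ), s.degree = d → monomial s c ∈ S by
    have hp : p ∈ S := by
      rw [as_sum p]
      exact S.sum_mem fun s _ => hmonomial _ s _ rfl
    obtain ⟨⟨q, c⟩, hqc⟩ := hp
    exact ⟨q, c, hqc.symm⟩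
  intro d
  induction d using Nat.strong_induction_on with
  | _ d ih =>
    rintro s c rfl
    rcases eq_or_ne s.degree 0 with hs | hs
    · rw [(Finsupp.degree_eq_zero_iff s).1 hs]
      exact ⟨(0, c), by simp [algebraMap_eq]⟩
    have hrange : T (monomial s c) ∈ S := ⟨(monomial s c, 0), by simp⟩
    have hlower : ∑ i, pderiv i (pderiv i (monomial s c)) ∈ S :=
      S.sum_mem fun i _ =>
        pderiv_pderiv_monomial_mem_of_degree_lt (fun t c ht => ih _ ht t c rfl) c
    have heigen : (l + s.degree) • monomial s c ∈ S := by
      convert S.add_mem hrange hlower using 1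
      rw [hT, LinearMap.add_apply, ornsteinUhlenbeck_monomial, LinearMap.smul_apply,
        LinearMap.id_apply]
      module
    have hne : l + s.degree ≠ 0 := by positivity
    exact (S.smul_mem_iff hne).1 heigen

theorem smul_id_add_ornsteinUhlenbeck_surjective {l : ℝ} (hl : 0 < l) :
    Function.Surjective
      (l • .id + ornsteinUhlenbeck : MvPolynomial ι ℝ →ₗ[ℝ] MvPolynomial ι ℝ) := fun p => by
  obtain ⟨q, c, hp⟩ := exists_eq_smul_add_ornsteinUhlenbeck_add_C hl.le p
  refine ⟨q + C (c / l), ?_⟩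
  rw [map_add, hp, LinearMap.add_apply, LinearMap.add_apply, ornsteinUhlenbeck_C, add_zero,
    LinearMap.smul_apply, LinearMap.smul_apply, LinearMap.id_apply, LinearMap.id_apply,
    smul_eq_C_mul (C _), ← map_mul, mul_div_cancel₀ _ hl.ne']

end OrnsteinUhlenbeck

section Comparison

variable {X : Type*} [NormedAddCommGroup X] [MeasurableSpace X] [BorelSpace X]
  {μ ν : Measure X} [HasExpMoments μ] [HasExpMoments ν]

namespace expGrowth

theorem norm_toL2_mul_le {f : expGrowth X} {B : ℝ} (hB : 0 ≤ B) (hf : ∀ x, |f x| ≤ B)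
    (g : expGrowth X) : ‖toL2 μ (f * g)‖ ≤ B * ‖toL2 μ g‖ := by
  rw [← sq_le_sq₀ (by positivity) (by positivity), mul_pow, norm_toL2_sq, norm_toL2_sq,
    ← integral_const_mul]
  refine integral_mono (integrable ((f * g) ^ 2) μ) ((integrable (g ^ 2) μ).const_mul _) fun x => ?_
  change (f x * g x) ^ 2 ≤ B ^ 2 * g x ^ 2
  rw [mul_pow]
  exact mul_le_mul_of_nonneg_right (sq_le_sq' (neg_le_of_abs_le (hf x)) (le_of_abs_le (hf x)))
    (sq_nonneg _)

theorem norm_toL2_sq_le_of_le_smul {c : NNReal} (hle : μ ≤ c • ν) (f : expGrowth X) :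
    ‖toL2 μ f‖ ^ 2 ≤ c * ‖toL2 ν f‖ ^ 2 := by
  rw [norm_toL2_sq, norm_toL2_sq]
  refine (integral_mono_measure hle (.of_forall fun x => sq_nonneg (f x))
    (integrable (f ^ 2) ν).smul_measure_nnreal).trans_eq ?_
  rw [integral_smul_nnreal_measure]
  rfl

theorem denseRange_toL2_of_le_smul {P : Type*} [AddCommGroup P] [Module ℝ P] {c : NNReal}
    (hle : μ ≤ c • ν) {S T : P →ₗ[ℝ] expGrowth X} (hT : DenseRange (toL2 ν ∘ₗ T))
    (hS : DenseRange (toL2 μ ∘ₗ S)) : DenseRange (toL2 μ ∘ₗ T) := by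
  refine dense_closure.1 (hS.mono (Set.range_subset_iff.2 fun q => ?_))
  refine Metric.mem_closure_iff.2 fun ε hε => ?_
  obtain ⟨p, hp⟩ := hT.exists_dist_lt (toL2 ν (S q)) (ε := ε / (c + 1)) (by positivity)
  refine ⟨_, ⟨p, rfl⟩, lt_of_pow_lt_pow_left₀ 2 hε.le ?_⟩
  rw [dist_eq_norm, LinearMap.comp_apply, ← map_sub, lt_div_iff₀ (by positivity)] at hp
  rw [dist_eq_norm, LinearMap.comp_apply, LinearMap.comp_apply, ← map_sub]
  refine (norm_toL2_sq_le_of_le_smul hle _).trans_lt ?_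
  have hp' := pow_lt_pow_left₀ hp (by positivity) two_ne_zero
  nlinarith [sq_nonneg ‖toL2 ν (S q - T p)‖, mul_nonneg c.2 (sq_nonneg ‖toL2 ν (S q - T p)‖),
    mul_nonneg (mul_nonneg c.2 c.2) (sq_nonneg ‖toL2 ν (S q - T p)‖)]

end expGrowth

end Comparison

section Resolvent

open MvPolynomial

variable {ι : Type*} [Fintype ι]

theorem diffusionGenerator_add (a b : ι → expGrowth (ι → ℝ)) :
    diffusionGenerator (a + b) = diffusionGenerator a
      + ∑ i, LinearMap.mulLeft ℝ (b i) ∘ₗ polyFun.toLinearMap ∘ₗ (pderiv i).toLinearMap := by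
  rw [diffusionGenerator, diffusionGenerator, ← Finset.sum_add_distrib]
  refine Finset.sum_congr rfl fun i _ => LinearMap.ext fun p => ?_
  exact (sub_left_inj.2 (add_mul (a i) (b i) _)).trans (add_sub_right_comm _ _ _)

theorem denseRange_resolvent_X (μ : Measure (ι → ℝ)) [HasExpMoments μ] {l : ℝ} (hl : 0 < l) :
    DenseRange
      (l • polyL2 μ + expGrowth.toL2 μ ∘ₗ diffusionGenerator fun i => polyFun (X i)) := by
  have hcomp : l • polyL2 μ + expGrowth.toL2 μ ∘ₗ diffusionGenerator (fun i => polyFun (X i))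
      = polyL2 μ ∘ₗ (l • .id + ornsteinUhlenbeck) := by
    rw [diffusionGenerator_eq_ornsteinUhlenbeck, LinearMap.comp_add, LinearMap.comp_smul,
      LinearMap.comp_id]
    rfl
  rw [hcomp, DenseRange, LinearMap.coe_comp,
    (smul_id_add_ornsteinUhlenbeck_surjective hl).range_comp]
  exact denseRange_polyL2 μ

variable [DecidableEq ι]

theorem HasNegLogGradient.exists_denseRange_resolvent_X_add {γ : Measure (ι → ℝ)} [HasExpMoments γ]
    (hγ : HasNegLogGradient γ fun i => polyFun (X i)) {a : ι → expGrowth (ι → ℝ)} {B : ℝ}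
    (ha : ∀ i x, |a i x| ≤ B) :
    ∃ l : ℝ, 0 < l ∧ DenseRange
      (l • polyL2 γ + expGrowth.toL2 γ ∘ₗ diffusionGenerator ((fun i => polyFun (X i)) + a)) := by
  rw [diffusionGenerator_add, LinearMap.comp_add]
  simp only [← add_assoc]
  refine exists_denseRange_smul_add_of_norm_sq_le hγ.inner_diffusionGenerator_polyL2
    (fun l hl => denseRange_resolvent_X γ hl) _ (Fintype.card ι * B ^ 2) fun p => ?_
  have hterm (i : ι) : ‖expGrowth.toL2 γ (a i * polyFun (pderiv i p))‖ ^ 2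
      ≤ B ^ 2 * ‖polyL2 γ (pderiv i p)‖ ^ 2 := by
    rw [← mul_pow]
    have hB : 0 ≤ B := (abs_nonneg _).trans (ha i 0)
    gcongr
    exact expGrowth.norm_toL2_mul_le hB (ha i) _
  have hsum : ∀ f : ι → Lp ℝ 2 γ, ‖∑ i, f i‖ ^ 2 ≤ Fintype.card ι * ∑ i, ‖f i‖ ^ 2 := fun f =>
    (pow_le_pow_left₀ (norm_nonneg _) (norm_sum_le _ _) 2).trans sq_sum_le_card_mul_sum_sq
  rw [LinearMap.comp_apply, LinearMap.sum_apply, map_sum, mul_assoc, Finset.mul_sum]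
  exact (hsum _).trans (by gcongr; exact hterm _)

end Resolvent

section Kernel

open MvPolynomial

theorem norm_polyL2_one {ι : Type*} [Fintype ι] (μ : Measure (ι → ℝ)) [HasExpMoments μ]
    [IsProbabilityMeasure μ] : ‖polyL2 μ 1‖ = 1 := by
  rw [← sq_eq_sq₀ (norm_nonneg _) zero_le_one, polyL2, LinearMap.comp_apply,
    expGrowth.norm_toL2_sq, AlgHom.toLinearMap_apply, map_one]
  refine (integral_congr_ae (.of_forall fun x => ?_)).trans (integral_const (1 ^ 2)) |>.trans ?_
  · rfl
  · simp

variable {ι : Type*} [Fintype ι] [DecidableEq ι] {μ : Measure (ι → ℝ)} [HasExpMoments μ]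
  {a : ι → expGrowth (ι → ℝ)} {w : expGrowth (ι → ℝ)}

namespace HasNegLogGradient

/- For `w = e^W` and `μ` the tilt by `e^{-W}`, the weight `w` cancels the tilt, so that the adjoint
of `∂ᵢ` is the one for the Gaussian measure. -/
theorem inner_polyL2_toL2_mul (hμ : HasNegLogGradient μ ((fun i => polyFun (X i)) + a))
    (hw : ∀ i, HasPartialDeriv i w (a i * w : expGrowth _)) (i : ι) (p q : MvPolynomial ι ℝ) :
    ⟪polyL2 μ p, expGrowth.toL2 μ (w * polyFun (X i * q - pderiv i q))⟫_ℝ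
      = ⟪polyL2 μ (pderiv i p), expGrowth.toL2 μ (w * polyFun q)⟫_ℝ := by
  have hparts := hμ i (polyFun (p * q) * w)
    (polyFun (pderiv i (p * q)) * w + polyFun (p * q) * (a i * w))
    ((hasPartialDeriv_polyFun i _).mul (hw i))
  rw [← expGrowth.inner_toL2_one_right, ← expGrowth.inner_toL2_one_right, ← sub_eq_zero,
    ← inner_sub_left, ← map_sub] at hparts
  rw [polyL2, LinearMap.comp_apply, LinearMap.comp_apply, ← sub_eq_zero, ← neg_eq_zero, neg_sub]
  refine Eq.trans ?_ hparts
  simp only [AlgHom.toLinearMap_apply, expGrowth.inner_toL2]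
  rw [← integral_sub (expGrowth.integrable _ μ) (expGrowth.integrable _ μ)]
  refine congrArg (fun f : expGrowth (ι → ℝ) => ∫ x, f x ∂μ)
    (a₁ := polyFun (pderiv i p) * (w * polyFun q)
      - polyFun p * (w * polyFun (X i * q - pderiv i q))) ?_
  rw [pderiv_mul]
  simp only [map_sub, map_add, map_mul, Pi.add_apply]
  ring

theorem inner_toL2_mul_ornsteinUhlenbeck_eq_zero
    (hμ : HasNegLogGradient μ ((fun i => polyFun (X i)) + a))
    (hw : ∀ i, HasPartialDeriv i w (a i * w : expGrowth _)) {l : ℝ} (hl : 0 < l)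
    (hdense : DenseRange (l • polyL2 μ
      + expGrowth.toL2 μ ∘ₗ diffusionGenerator ((fun i => polyFun (X i)) + a)))
    {g : Lp ℝ 2 μ}
    (hg : ∀ p, ⟪expGrowth.toL2 μ (diffusionGenerator ((fun i => polyFun (X i)) + a) p), g⟫_ℝ = 0)
    (q : MvPolynomial ι ℝ) : ⟪g, expGrowth.toL2 μ (w * polyFun (ornsteinUhlenbeck q))⟫_ℝ = 0 := by
  rw [ornsteinUhlenbeck_apply, map_sum, Finset.mul_sum, map_sum, inner_sum]
  exact Finset.sum_eq_zero fun i _ =>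
    inner_eq_zero_of_orthogonal_range hμ.inner_diffusionGenerator_polyL2 hl hdense hg i
      fun p => hμ.inner_polyL2_toL2_mul hw i p (pderiv i q)

theorem eq_zero_of_orthogonal_range
    (hμ : HasNegLogGradient μ ((fun i => polyFun (X i)) + a))
    (hw : ∀ i, HasPartialDeriv i w (a i * w : expGrowth _)) (hw₀ : ∀ x, w x ≠ 0)
    {l : ℝ} (hl : 0 < l) (hdense : DenseRange (l • polyL2 μ
      + expGrowth.toL2 μ ∘ₗ diffusionGenerator ((fun i => polyFun (X i)) + a)))
    {g : Lp ℝ 2 μ}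
    (hg : ∀ p, ⟪expGrowth.toL2 μ (diffusionGenerator ((fun i => polyFun (X i)) + a) p), g⟫_ℝ = 0)
    (hgw : ⟪g, expGrowth.toL2 μ w⟫_ℝ = 0) : g = 0 := by
  have horth (p : MvPolynomial ι ℝ) : ⟪expGrowth.toL2 μ (w * polyFun p), g⟫_ℝ = 0 := by
    obtain ⟨q, c, hp⟩ := exists_eq_smul_add_ornsteinUhlenbeck_add_C le_rfl p
    have hsplit : w * polyFun p = w * polyFun (ornsteinUhlenbeck q) + c • w := by
      rw [hp, zero_smul, zero_add, map_add, mul_add, C_eq_smul_one, map_smul, map_one,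
        mul_smul_comm, mul_one]
    rw [real_inner_comm, hsplit, map_add, map_smul, inner_add_right, inner_smul_right, hgw,
      mul_zero, add_zero]
    exact hμ.inner_toL2_mul_ornsteinUhlenbeck_eq_zero hw hl hdense hg q
  exact (denseRange_toL2_mul_polyFun μ hw₀).eq_zero_of_inner_right ℝ horth

theorem eq_inner_smul_one_of_orthogonal_range [IsProbabilityMeasure μ]
    (hμ : HasNegLogGradient μ ((fun i => polyFun (X i)) + a))
    (hw : ∀ i, HasPartialDeriv i w (a i * w : expGrowth _)) (hw₀ : ∀ x, w x ≠ 0)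
    {l : ℝ} (hl : 0 < l) (hdense : DenseRange (l • polyL2 μ
      + expGrowth.toL2 μ ∘ₗ diffusionGenerator ((fun i => polyFun (X i)) + a)))
    {g : Lp ℝ 2 μ}
    (hg : ∀ p, ⟪expGrowth.toL2 μ (diffusionGenerator ((fun i => polyFun (X i)) + a) p), g⟫_ℝ = 0) :
    g = ⟪polyL2 μ 1, g⟫_ℝ • polyL2 μ 1 := by
  set u := polyL2 μ 1
  have hu (p : MvPolynomial ι ℝ) :
      ⟪expGrowth.toL2 μ (diffusionGenerator ((fun i => polyFun (X i)) + a) p), u⟫_ℝ = 0 := by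
    rw [hμ.inner_diffusionGenerator_polyL2]
    exact Finset.sum_eq_zero fun i _ => by rw [pderiv_one, map_zero, inner_zero_right]
  have hnorm : ⟪u, u⟫_ℝ = 1 := by rw [real_inner_self_eq_norm_sq, norm_polyL2_one, one_pow]
  set s := ⟪u, expGrowth.toL2 μ w⟫_ℝ
  set t := ⟪g, expGrowth.toL2 μ w⟫_ℝ
  have hs : s ≠ 0 := fun hs => by
    rw [hμ.eq_zero_of_orthogonal_range hw hw₀ hl hdense hu hs, inner_zero_left] at hnorm
    exact zero_ne_one hnorm
  have hsub : s • g - t • u = 0 := by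
    refine hμ.eq_zero_of_orthogonal_range hw hw₀ hl hdense (fun p => ?_) ?_
    · rw [inner_sub_right, inner_smul_right, inner_smul_right, hg, hu, mul_zero, mul_zero, sub_zero]
    · rw [inner_sub_left, inner_smul_left, inner_smul_left]
      exact sub_eq_zero.2 (mul_comm s t)
  have hgu : g = (s⁻¹ * t) • u := by
    rw [mul_smul, ← sub_eq_zero.1 hsub, inv_smul_smul₀ hs]
  nth_rw 2 [hgu]
  rw [inner_smul_right, hnorm, mul_one, hgu]

end HasNegLogGradient

end Kernel

section Tilting

theorem integral_tilted_eq_div {X : Type*} [MeasurableSpace X] (μ : Measure X) (f g : X → ℝ) :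
    ∫ x, g x ∂μ.tilted f = (∫ x, Real.exp (f x) * g x ∂μ) / ∫ x, Real.exp (f x) ∂μ := by
  rw [integral_tilted, ← integral_div]
  simp only [smul_eq_mul, div_mul_eq_mul_div]

theorem tilted_le_smul {X : Type*} [MeasurableSpace X] (μ : Measure X) {f : X → ℝ}
    (hf : ∀ x, f x ≤ 0) : μ.tilted f ≤ (∫ x, Real.exp (f x) ∂μ)⁻¹.toNNReal • μ := by
  change _ ≤ ((∫ x, Real.exp (f x) ∂μ)⁻¹.toNNReal : ENNReal) • μ
  rw [← withDensity_const]
  refine withDensity_mono (.of_forall fun x => ENNReal.ofReal_le_ofReal ?_)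
  rw [← one_div]
  exact div_le_div_of_nonneg_right (Real.exp_le_one_iff.2 (hf x))
    (integral_nonneg fun _ => Real.exp_nonneg _)

theorem HasExpMoments.tilted {X : Type*} [NormedAddCommGroup X] [MeasurableSpace X] [BorelSpace X]
    (μ : Measure X) [HasExpMoments μ] {f : X → ℝ} {B : NNReal} (hf : LipschitzWith B f) :
    HasExpMoments (μ.tilted f) where
  integrable_exp c := by
    have hexp := expGrowth.exp_mem_of_lipschitzWith hf
    have hexp_norm : (fun x : X => Real.exp (c * ‖x‖)) ∈ expGrowth X :=
      expGrowth.mem_of_norm_le (by fun_prop) 1 c fun x => by rw [Real.abs_exp, one_mul]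
    exact (integrable_tilted_iff (expGrowth.integrable ⟨_, hexp⟩ μ) _).2
      (expGrowth.integrable ⟨_, mul_mem hexp hexp_norm⟩ μ)

theorem HasNegLogGradient.tilted {ι : Type*} [Fintype ι] [DecidableEq ι] {μ : Measure (ι → ℝ)}
    [HasExpMoments μ] {b a : ι → expGrowth (ι → ℝ)} (hb : HasNegLogGradient μ b)
    {W : (ι → ℝ) → ℝ} {B : NNReal} (hW : LipschitzWith B W)
    (ha : ∀ i, HasPartialDeriv i W (a i)) :
    HasNegLogGradient (μ.tilted fun x => -W x) (b + a) := fun i f f' hf => by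
  set e : expGrowth (ι → ℝ) := ⟨_, expGrowth.exp_mem_of_lipschitzWith hW.neg⟩
  have he : HasPartialDeriv i e (-(a i) * e : expGrowth _) :=
    .exp (f := fun x => -W x) (f' := fun x => -a i x) fun x => HasDerivAt.neg (ha i x)
  have hparts := hb i (e * f) (-(a i) * e * f + e * f') (he.mul hf)
  rw [integral_tilted_eq_div, integral_tilted_eq_div]
  congr 1
  change ∫ x, (e * f') x ∂μ = ∫ x, (e * ((b + a) i * f)) x ∂μ
  rw [← expGrowth.inner_toL2_one_right, ← expGrowth.inner_toL2_one_right] at hparts ⊢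
  rw [← sub_eq_zero, ← inner_sub_left, ← map_sub] at hparts ⊢
  refine Eq.trans ?_ hparts
  congr 2
  rw [Pi.add_apply]
  ring

end Tilting

section SecondOrderPoincare

open MvPolynomial

variable {ι : Type*} [Fintype ι]

theorem denseRange_resolvent_of_le_smul {μ ν : Measure (ι → ℝ)} [HasExpMoments μ] [HasExpMoments ν]
    {c : NNReal} (hle : μ ≤ c • ν) (b : ι → expGrowth (ι → ℝ)) {l : ℝ}
    (hdense : DenseRange (l • polyL2 ν + expGrowth.toL2 ν ∘ₗ diffusionGenerator b)) :
    DenseRange (l • polyL2 μ + expGrowth.toL2 μ ∘ₗ diffusionGenerator b) :=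
  expGrowth.denseRange_toL2_of_le_smul hle (S := polyFun.toLinearMap)
    (T := l • (polyFun : MvPolynomial ι ℝ →ₐ[ℝ] expGrowth (ι → ℝ)).toLinearMap
      + diffusionGenerator b) hdense (denseRange_polyL2 μ)

theorem norm_polyL2_sq (μ : Measure (ι → ℝ)) [HasExpMoments μ] (p : MvPolynomial ι ℝ) :
    ‖polyL2 μ p‖ ^ 2 = ∫ x, polyFun (p ^ 2) x ∂μ := by
  rw [map_pow]
  exact expGrowth.norm_toL2_sq _

theorem inner_polyL2_one (μ : Measure (ι → ℝ)) [HasExpMoments μ] (p : MvPolynomial ι ℝ) :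
    ⟪polyL2 μ p, polyL2 μ 1⟫_ℝ = ∫ x, polyFun p x ∂μ := by
  rw [← expGrowth.inner_toL2_one_right, ← map_one polyFun]
  rfl

variable [DecidableEq ι]

/-- The variance of a polynomial is at most half of the sum of the second moments and the squared
means of its partial derivatives. It improves the Poincaré inequality
`Var p ≤ ∑ i, ∫ (∂ᵢ p)²`, with equality for affine `p` and for `|x|²` under the Gaussian measure. -/
def SecondOrderPoincare (μ : Measure (ι → ℝ)) : Prop :=
  ∀ p : MvPolynomial ι ℝ, ∫ x, polyFun (p ^ 2) x ∂μ - (∫ x, polyFun p x ∂μ) ^ 2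
    ≤ (∑ i, (∫ x, polyFun (pderiv i p ^ 2) x ∂μ + (∫ x, polyFun (pderiv i p) x ∂μ) ^ 2)) / 2

theorem HasPartialDeriv.abs_le_of_lipschitzWith {W W' : (ι → ℝ) → ℝ} {i : ι}
    (hW' : HasPartialDeriv i W W') {B : NNReal} (hW : LipschitzWith B W) (x : ι → ℝ) :
    |W' x| ≤ B := by
  simpa only [Pi.norm_single, norm_one, mul_one, Real.norm_eq_abs] using
    (hW' x).le_of_lipschitzOn Filter.univ_mem hW.lipschitzOnWith

theorem HasNegLogGradient.secondOrderPoincare {μ : Measure (ι → ℝ)} [HasExpMoments μ]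
    [IsProbabilityMeasure μ] {a : ι → expGrowth (ι → ℝ)} {w : expGrowth (ι → ℝ)}
    (hμ : HasNegLogGradient μ ((fun i => polyFun (X i)) + a))
    (hw : ∀ i, HasPartialDeriv i w (a i * w : expGrowth _)) (hw₀ : ∀ x, w x ≠ 0)
    {l : ℝ} (hl : 0 < l) (hdense : DenseRange (l • polyL2 μ
      + expGrowth.toL2 μ ∘ₗ diffusionGenerator ((fun i => polyFun (X i)) + a)))
    {H : ι → ι → expGrowth (ι → ℝ)} (hH : ∀ i j, HasPartialDeriv j (a i) (H i j))
    (hpos : ∀ x (v : ι → ℝ), 0 ≤ ∑ i, ∑ j, H j i x * v j * v i) :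
    SecondOrderPoincare μ := fun p => by
  have hκ (x v : ι → ℝ) : 1 * ∑ i, v i ^ 2
      ≤ ∑ i, ∑ j, (polyFun (pderiv i (X j)) + H j i : expGrowth _) x * v j * v i := by
    have hsplit (i j : ι) : (polyFun (pderiv i (X j)) + H j i : expGrowth _) x * v j * v i
        = (if i = j then v i ^ 2 else 0) + H j i x * v j * v i := by
      change (polyFun (pderiv i (X j)) x + H j i x) * v j * v i = _
      rw [polyFun_apply]
      rcases eq_or_ne i j with rfl | hij
      · rw [pderiv_X_self, map_one, if_pos rfl]
        ring
      · rw [pderiv_X_of_ne hij.symm, map_zero, zero_add, if_neg hij, zero_add]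
    simp only [hsplit, Finset.sum_add_distrib, Finset.sum_ite_eq, Finset.mem_univ, if_true, one_mul]
    exact le_add_of_nonneg_right (hpos x v)
  have hbochner := hμ.bochner (fun i j => (hasPartialDeriv_polyFun j _).add (hH i j)) hκ
  have hvar := norm_sq_sub_inner_sq_le_of_bochner (J := polyL2 μ)
    (L := expGrowth.toL2 μ ∘ₗ diffusionGenerator ((fun i => polyFun (X i)) + a))
    (D := fun i => (pderiv i).toLinearMap) one_pos
    hμ.inner_diffusionGenerator_polyL2 hbochner (norm_polyL2_one μ) (fun i => pderiv_one)
    (fun g => hμ.eq_inner_smul_one_of_orthogonal_range hw hw₀ hl hdense) p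
  simpa only [norm_polyL2_sq, inner_polyL2_one, mul_one, Derivation.coeFn_coe] using hvar

theorem HasNegLogGradient.secondOrderPoincare_tilted {γ : Measure (ι → ℝ)} [HasExpMoments γ]
    [NeZero γ] (hγ : HasNegLogGradient γ fun i => polyFun (X i)) {W : (ι → ℝ) → ℝ} {B : NNReal}
    (hW : LipschitzWith B W) (hW₀ : ∀ x, 0 ≤ W x) {a : ι → expGrowth (ι → ℝ)}
    (ha : ∀ i, HasPartialDeriv i W (a i)) {H : ι → ι → expGrowth (ι → ℝ)}
    (hH : ∀ i j, HasPartialDeriv j (a i) (H i j))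
    (hpos : ∀ x (v : ι → ℝ), 0 ≤ ∑ i, ∑ j, H j i x * v j * v i) :
    SecondOrderPoincare (γ.tilted fun x => -W x) := by
  have : HasExpMoments (γ.tilted fun x => -W x) := HasExpMoments.tilted γ hW.neg
  have : IsProbabilityMeasure (γ.tilted fun x => -W x) := isProbabilityMeasure_tilted
    (expGrowth.integrable ⟨_, expGrowth.exp_mem_of_lipschitzWith hW.neg⟩ γ)
  obtain ⟨l, hl, hdense⟩ :=
    hγ.exists_denseRange_resolvent_X_add fun i => (ha i).abs_le_of_lipschitzWith hW
  have hdense_tilted : DenseRange (l • polyL2 (γ.tilted fun x => -W x)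
      + expGrowth.toL2 (γ.tilted fun x => -W x)
      ∘ₗ diffusionGenerator ((fun i => polyFun (X i)) + a)) :=
    denseRange_resolvent_of_le_smul (tilted_le_smul γ fun x => neg_nonpos.2 (hW₀ x)) _ hdense
  let w : expGrowth (ι → ℝ) := ⟨_, expGrowth.exp_mem_of_lipschitzWith hW⟩
  have hw (i : ι) : HasPartialDeriv i w (a i * w : expGrowth _) := (ha i).exp
  have hw₀ (x : ι → ℝ) : w x ≠ 0 := (Real.exp_pos _).ne'
  exact (hγ.tilted hW ha).secondOrderPoincare hw hw₀ hl hdense_tilted hH hpos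

end SecondOrderPoincare

section Gaussian

instance HasExpMoments.pi {ι X : Type*} [Fintype ι] [NormedAddCommGroup X] [MeasurableSpace X]
    [BorelSpace X] [SecondCountableTopology X] (μ : ι → Measure X) [∀ i, HasExpMoments (μ i)] :
    HasExpMoments (Measure.pi μ) where
  integrable_exp c := by
    refine Integrable.mono' (.fintype_prod fun i => HasExpMoments.integrable_exp (μ := μ i) |c|)
      (Continuous.aestronglyMeasurable (by fun_prop)) (.of_forall fun x => ?_)
    have hsum : ‖x‖ ≤ ∑ i, ‖x i‖ := (pi_norm_le_iff_of_nonneg (by positivity)).2 fun i =>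
      Finset.single_le_sum (f := fun i => ‖x i‖) (fun j _ => norm_nonneg _) (Finset.mem_univ i)
    rw [Real.norm_eq_abs, Real.abs_exp, ← Real.exp_sum, Real.exp_le_exp, ← Finset.mul_sum]
    exact mul_le_mul (le_abs_self c) hsum (norm_nonneg _) (abs_nonneg c)

instance hasExpMoments_gaussianReal (m : ℝ) (v : NNReal) :
    HasExpMoments (ProbabilityTheory.gaussianReal m v) where
  integrable_exp c := ProbabilityTheory.integrable_exp_mul_abs
    (ProbabilityTheory.integrable_exp_mul_gaussianReal c)
    (ProbabilityTheory.integrable_exp_mul_gaussianReal (-c))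

theorem HasNegLogGradient.withDensity {ι : Type*} [Fintype ι] [DecidableEq ι]
    {ρ : (ι → ℝ) → ℝ} (hρ : Measurable ρ) (hρ₀ : ∀ x, 0 ≤ ρ x)
    [HasExpMoments (volume.withDensity fun x => ENNReal.ofReal (ρ x))]
    {b : ι → expGrowth (ι → ℝ)} (hb : ∀ i, HasPartialDeriv i ρ fun x => -(b i x * ρ x)) :
    HasNegLogGradient (volume.withDensity fun x => ENNReal.ofReal (ρ x)) b := fun i f f' hf => by
  have hint (g : expGrowth (ι → ℝ)) : Integrable (fun x => g x * ρ x) := by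
    simpa only [ENNReal.toReal_ofReal (hρ₀ _)] using (integrable_withDensity_iff
      hρ.ennreal_ofReal (.of_forall fun x => ENNReal.ofReal_lt_top)).1 (expGrowth.integrable g _)
  have hintegral (g : expGrowth (ι → ℝ)) :
      ∫ x, g x ∂volume.withDensity (fun x => ENNReal.ofReal (ρ x)) = ∫ x, g x * ρ x := by
    rw [integral_withDensity_eq_integral_toReal_smul hρ.ennreal_ofReal
      (.of_forall fun x => ENNReal.ofReal_lt_top)]
    simp only [ENNReal.toReal_ofReal (hρ₀ _), smul_eq_mul, mul_comm]
  have hbf (x : ι → ℝ) : (b i * f) x * ρ x = -(f x * -(b i x * ρ x)) := by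
    change b i x * f x * ρ x = _
    ring
  have hparts := integral_bilinear_hasLineDerivAt_right_eq_neg_left_of_integrable
    (μ := (volume : Measure (ι → ℝ))) (B := ContinuousLinearMap.mul ℝ ℝ) (f := f) (f' := f')
    (hint f') ((hint (b i * f)).neg.congr (.of_forall fun x => ?_)) (hint f)
    (fun x _ => hf x) (fun x _ => hb i x)
  · simp only [ContinuousLinearMap.mul_apply'] at hparts
    rw [hintegral, hintegral, ← neg_eq_iff_eq_neg.2 hparts, ← integral_neg]
    simp only [hbf]
  · rw [Pi.neg_apply, hbf, neg_neg]
    rfl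

theorem pi_withDensity_ofReal {ι X : Type*} [Fintype ι] [MeasurableSpace X] (μ : Measure X)
    [SigmaFinite μ] {f : ι → X → ℝ} (hf₀ : ∀ i x, 0 ≤ f i x) (hf : ∀ i, Integrable (f i) μ) :
    Measure.pi (fun i => μ.withDensity fun x => ENNReal.ofReal (f i x))
      = (Measure.pi fun _ => μ).withDensity fun x => ENNReal.ofReal (∏ i, f i (x i)) := by
  refine Measure.pi_eq fun s hs => ?_
  have hprod : Integrable (fun x : ι → X => ∏ i, f i (x i))
      (Measure.pi fun i => μ.restrict (s i)) :=
    .fintype_prod fun i => (hf i).restrict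
  rw [withDensity_apply _ (MeasurableSet.univ_pi hs), Measure.restrict_pi_pi,
    ← ofReal_integral_eq_lintegral_ofReal hprod
      (.of_forall fun x => Finset.prod_nonneg fun i _ => hf₀ i (x i)),
    integral_fintype_prod_eq_prod,
    ENNReal.ofReal_prod_of_nonneg fun i _ => integral_nonneg (hf₀ i)]
  refine Finset.prod_congr rfl fun i _ => ?_
  rw [withDensity_apply _ (hs i),
    ofReal_integral_eq_lintegral_ofReal (hf i).restrict (.of_forall (hf₀ i))]

open MvPolynomial

variable (ι : Type*) [Fintype ι]

/-- The standard Gaussian measure on `ι → ℝ`. -/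
noncomputable abbrev stdGaussianPi : Measure (ι → ℝ) :=
  Measure.pi fun _ => ProbabilityTheory.gaussianReal 0 1

theorem stdGaussianPi_eq_withDensity :
    stdGaussianPi ι = volume.withDensity fun x =>
      ENNReal.ofReal (∏ i, ProbabilityTheory.gaussianPDFReal 0 1 (x i)) := by
  rw [stdGaussianPi, ProbabilityTheory.gaussianReal_of_var_ne_zero _ one_ne_zero]
  exact pi_withDensity_ofReal volume (fun _ => ProbabilityTheory.gaussianPDFReal_nonneg 0 1)
    fun _ => ProbabilityTheory.integrable_gaussianPDFReal 0 1

theorem hasPartialDeriv_prod_gaussianPDFReal [DecidableEq ι] (i : ι) :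
    HasPartialDeriv i (fun x => ∏ j, ProbabilityTheory.gaussianPDFReal 0 1 (x j))
      fun x => -(x i * ∏ j, ProbabilityTheory.gaussianPDFReal 0 1 (x j)) := by
  set q : MvPolynomial ι ℝ := C (-1 / 2) * ∑ j, X j ^ 2 with hq
  have hpderiv (x : ι → ℝ) : polyFun (pderiv i q) x = -x i := by
    rw [polyFun_apply, hq, pderiv_C_mul, pderiv_sum_X_sq, eval_mul, eval_C, eval_mul,
      eval_C, eval_X]
    ring
  have hprod (x : ι → ℝ) : ∏ j, ProbabilityTheory.gaussianPDFReal 0 1 (x j)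
      = (∏ _j : ι, (√(2 * Real.pi))⁻¹) * Real.exp (polyFun q x) := by
    rw [polyFun_apply, hq, eval_mul, map_sum, Finset.mul_sum, Real.exp_sum,
      ← Finset.prod_mul_distrib]
    simp [ProbabilityTheory.gaussianPDFReal, div_eq_inv_mul]
  convert (hasPartialDeriv_const i (∏ _j : ι, (√(2 * Real.pi))⁻¹)).mul
    (hasPartialDeriv_polyFun i q).exp using 2 with x x
  · exact hprod x
  · simp only [hprod, hpderiv, Pi.add_apply, Pi.mul_apply, Pi.zero_apply]
    ring

theorem hasNegLogGradient_stdGaussianPi [DecidableEq ι] :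
    HasNegLogGradient (stdGaussianPi ι) fun i => polyFun (X i) := by
  have : HasExpMoments (volume.withDensity fun x : ι → ℝ =>
      ENNReal.ofReal (∏ i, ProbabilityTheory.gaussianPDFReal 0 1 (x i))) :=
    stdGaussianPi_eq_withDensity ι ▸ inferInstance
  rw [stdGaussianPi_eq_withDensity]
  refine .withDensity (by fun_prop)
    (fun x => Finset.prod_nonneg fun i _ => ProbabilityTheory.gaussianPDFReal_nonneg _ _ _)
    fun i => ?_
  simp only [polyFun_apply, eval_X]
  exact hasPartialDeriv_prod_gaussianPDFReal ι i

end Gaussian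

section ConvexPotential

theorem hasDerivAt_comp_line {E F : Type*} [NormedAddCommGroup E] [NormedSpace ℝ E]
    [NormedAddCommGroup F] [NormedSpace ℝ F] {g : E → F} (hg : Differentiable ℝ g) (x v : E)
    (t : ℝ) : HasDerivAt (fun s : ℝ => g (x + s • v)) (fderiv ℝ g (x + t • v) v) t := by
  have hline : HasDerivAt (fun s : ℝ => x + s • v) v t := by
    simpa using ((hasDerivAt_id t).smul_const v).const_add x
  exact (hg (x + t • v)).hasFDerivAt.comp_hasDerivAt t hline

theorem fderiv_fderiv_nonneg_of_convexOn {E : Type*} [NormedAddCommGroup E] [NormedSpace ℝ E]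
    {f : E → ℝ} (hconv : ConvexOn ℝ Set.univ f) (hf : ContDiff ℝ 2 f) (x v : E) :
    0 ≤ fderiv ℝ (fderiv ℝ f) x v v := by
  have hdiff : Differentiable ℝ (fderiv ℝ f) :=
    (hf.fderiv_right (m := 1) le_rfl).differentiable one_ne_zero
  have hderiv := hasDerivAt_comp_line (hf.differentiable two_ne_zero) x v
  have hderiv₂ : HasDerivAt (fun t : ℝ => fderiv ℝ f (x + t • v) v)
      (fderiv ℝ (fderiv ℝ f) x v v) 0 := by
    simpa using (hasDerivAt_comp_line hdiff x v 0).clm_apply (hasDerivAt_const 0 v)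
  have hconv_line : ConvexOn ℝ Set.univ fun s : ℝ => f (x + s • v) := by
    simpa [Function.comp_def, AffineMap.lineMap_apply, add_comm] using
      hconv.comp_affineMap (AffineMap.lineMap x (x + v) : ℝ →ᵃ[ℝ] E)
  have hmono : Monotone fun t : ℝ => fderiv ℝ f (x + t • v) v := by
    rw [← funext fun t => (hderiv t).deriv, ← monotoneOn_univ]
    exact hconv_line.monotoneOn_deriv fun t _ => (hderiv t).differentiableAt
  rw [← hderiv₂.deriv]
  exact hmono.deriv_nonneg

theorem expGrowth.fderiv_apply_mem {E : Type*} [NormedAddCommGroup E] [NormedSpace ℝ E]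
    {f : E → ℝ} (hf : ContDiff ℝ 1 f) {B : NNReal} (hLip : LipschitzWith B f) (v : E) :
    (fun x => fderiv ℝ f x v) ∈ expGrowth E :=
  mem_of_bounded ((hf.continuous_fderiv one_ne_zero).clm_apply continuous_const) fun x =>
    (fderiv ℝ f x).le_of_opNorm_le (norm_fderiv_le_of_lipschitz ℝ hLip) v

theorem hasPartialDeriv_fderiv {ι : Type*} [Finite ι] [DecidableEq ι] {f : (ι → ℝ) → ℝ}
    (hf : Differentiable ℝ f) (i : ι) :
    HasPartialDeriv i f fun x => fderiv ℝ f x (Pi.single i 1) := fun x => by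
  have := Fintype.ofFinite ι
  exact (hf x).hasFDerivAt.hasLineDerivAt _

variable {ι : Type*} [Fintype ι] [DecidableEq ι]

theorem sum_sum_apply_single_mul (A : (ι → ℝ) →L[ℝ] (ι → ℝ) →L[ℝ] ℝ) (v : ι → ℝ) :
    ∑ i, ∑ j, A (Pi.single i 1) (Pi.single j 1) * v j * v i = A v v := by
  have hv : v = ∑ i, v i • Pi.single i 1 := by
    simpa only [smul_eq_mul, ← Pi.single_smul', mul_one] using (Finset.univ_sum_single v).symm
  conv_rhs => rw [hv]
  simp only [map_sum, map_smul, sum_apply, smul_apply, smul_eq_mul, Finset.mul_sum]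
  rw [Finset.sum_comm]
  exact Finset.sum_congr rfl fun j _ => Finset.sum_congr rfl fun i _ => by ring

open MvPolynomial

theorem HasNegLogGradient.secondOrderPoincare_tilted_of_convexOn {γ : Measure (ι → ℝ)}
    [HasExpMoments γ] [NeZero γ] (hγ : HasNegLogGradient γ fun i => polyFun (X i))
    {W : (ι → ℝ) → ℝ} (hconv : ConvexOn ℝ Set.univ W) (hW : ContDiff ℝ 2 W) {B B' : NNReal}
    (hLip : LipschitzWith B W) (hLip' : LipschitzWith B' (fderiv ℝ W)) (hW₀ : ∀ x, 0 ≤ W x) :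
    SecondOrderPoincare (γ.tilted fun x => -W x) := by
  have hfderiv : ContDiff ℝ 1 (fderiv ℝ W) := hW.fderiv_right le_rfl
  have hgrad (v : ι → ℝ) : ContDiff ℝ 1 fun x => fderiv ℝ W x v := hfderiv.clm_apply contDiff_const
  have hgradLip (v : ι → ℝ) := (ContinuousLinearMap.apply ℝ ℝ v).lipschitz.comp hLip'
  have hhess (x v w : ι → ℝ) : fderiv ℝ (fun y => fderiv ℝ W y w) x v
      = fderiv ℝ (fderiv ℝ W) x v w := by
    rw [fderiv_clm_apply (hfderiv.differentiable one_ne_zero x) (differentiableAt_const w)]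
    simp
  refine hγ.secondOrderPoincare_tilted hLip hW₀
    (a := fun i => ⟨_, expGrowth.fderiv_apply_mem (hW.of_le one_le_two) hLip (Pi.single i 1)⟩)
    (H := fun i j => ⟨_, expGrowth.fderiv_apply_mem (hgrad (Pi.single i 1))
      (hgradLip (Pi.single i 1)) (Pi.single j 1)⟩)
    (fun i => hasPartialDeriv_fderiv (hW.differentiable two_ne_zero) i)
    (fun i => hasPartialDeriv_fderiv ((hgrad _).differentiable one_ne_zero)) fun x v => ?_
  refine (fderiv_fderiv_nonneg_of_convexOn hconv hW x v).trans_eq ?_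
  rw [← sum_sum_apply_single_mul]
  simp only [← hhess]
  rfl

end ConvexPotential

section SmoothConvexApproximation

theorem convexOn_infDist {E : Type*} [SeminormedAddCommGroup E] [NormedSpace ℝ E] {K : Set E}
    (hK : Convex ℝ K) (hne : K.Nonempty) : ConvexOn ℝ Set.univ fun x => Metric.infDist x K := by
  refine ⟨convex_univ, fun x _ y _ a b ha hb hab => le_of_forall_pos_le_add fun ε hε => ?_⟩
  have exists_near (z : E) : ∃ u ∈ K, dist z u < Metric.infDist z K + ε :=
    (Metric.infDist_lt_iff hne).1 (lt_add_of_pos_right _ hε)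
  obtain ⟨u, hu, hxu⟩ := exists_near x
  obtain ⟨v, hv, hyv⟩ := exists_near y
  calc Metric.infDist (a • x + b • y) K
      ≤ dist (a • x + b • y) (a • u + b • v) :=
        Metric.infDist_le_dist_of_mem (hK hu hv ha hb hab)
    _ ≤ a * dist x u + b * dist y v := by
        refine (dist_add_add_le _ _ _ _).trans_eq ?_
        rw [dist_smul₀, dist_smul₀, Real.norm_of_nonneg ha, Real.norm_of_nonneg hb]
    _ ≤ a * (Metric.infDist x K + ε) + b * (Metric.infDist y K + ε) := by gcongr
    _ = a • Metric.infDist x K + b • Metric.infDist y K + ε := by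
        rw [smul_eq_mul, smul_eq_mul]
        linear_combination ε * hab

theorem convexOn_integral {α E : Type*} [MeasurableSpace α] {μ : Measure α} [AddCommGroup E]
    [Module ℝ E] {s : Set E} {f : α → E → ℝ} (hs : Convex ℝ s) (hf : ∀ a, ConvexOn ℝ s (f a))
    (hint : ∀ x ∈ s, Integrable (fun a => f a x) μ) : ConvexOn ℝ s fun x => ∫ a, f a x ∂μ := by
  refine ⟨hs, fun x hx y hy a b ha hb hab => ?_⟩
  rw [smul_eq_mul, smul_eq_mul, ← integral_const_mul, ← integral_const_mul,
    ← integral_add ((hint x hx).const_mul a) ((hint y hy).const_mul b)]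
  exact integral_mono (hint _ (hs hx hy ha hb hab))
    (((hint x hx).const_mul a).add ((hint y hy).const_mul b))
    fun t => (hf t).2 hx hy ha hb hab

open ContinuousLinearMap
open scoped Convolution ContDiff

theorem lipschitzWith_convolution_left {E F G H : Type*}
    [NormedAddCommGroup E] [SecondCountableTopology E] [MeasurableSpace E] [BorelSpace E]
    {μ : Measure E} [IsLocallyFiniteMeasure μ] [NormedAddCommGroup F] [NormedSpace ℝ F]
    [NormedAddCommGroup G] [NormedSpace ℝ G] [NormedAddCommGroup H] [NormedSpace ℝ H]
    (L : F →L[ℝ] G →L[ℝ] H) {k : E → F} {g : E → G} {B : NNReal} (hk : Continuous k)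
    (hk' : HasCompactSupport k) (hg : LipschitzWith B g) :
    LipschitzWith ((∫ t, ‖k t‖ ∂μ).toNNReal * ‖L‖₊ * B) (k ⋆[L, μ] g) := by
  have hconv := hk'.convolutionExists_left_of_continuous_right L hk.locallyIntegrable
    (μ := μ) hg.continuous
  have hint := (hk.integrable_of_hasCompactSupport hk' (μ := μ)).norm
  refine LipschitzWith.of_dist_le_mul fun x y => ?_
  rw [dist_eq_norm, convolution, convolution, ← integral_sub (hconv x) (hconv y)]
  refine (norm_integral_le_of_norm_le (hint.mul_const (‖L‖ * (B * dist x y))) (.of_forall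
    fun t => ?_)).trans_eq ?_
  · rw [← map_sub, ← mul_assoc, mul_comm ‖k t‖]
    refine (L.le_opNorm₂ _ _).trans ?_
    gcongr
    rw [← dist_eq_norm]
    exact (hg.dist_le_mul _ _).trans_eq (by rw [dist_sub_right])
  · rw [integral_mul_const]
    push_cast
    rw [Real.coe_toNNReal _ (integral_nonneg fun _ => norm_nonneg _)]
    ring

theorem convexOn_convolution_left {E : Type*} [NormedAddCommGroup E] [NormedSpace ℝ E]
    [MeasurableSpace E] [BorelSpace E] {μ : Measure E} [IsLocallyFiniteMeasure μ] {k f : E → ℝ}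
    (hk : Continuous k) (hk' : HasCompactSupport k) (hk₀ : ∀ x, 0 ≤ k x)
    (hconv : ConvexOn ℝ Set.univ f) (hf : Continuous f) :
    ConvexOn ℝ Set.univ (k ⋆[lsmul ℝ ℝ, μ] f) := by
  refine convexOn_integral convex_univ (fun t => ?_) fun x _ =>
    hk'.convolutionExists_left_of_continuous_right _ hk.locallyIntegrable hf x
  simpa [Function.comp_def, sub_eq_add_neg] using (hconv.translate_left (-t)).smul (hk₀ t)

theorem exists_convexOn_contDiff_lipschitzWith_approx {E : Type*} [NormedAddCommGroup E]
    [NormedSpace ℝ E] [FiniteDimensional ℝ E] {f : E → ℝ} {B : NNReal}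
    (hconv : ConvexOn ℝ Set.univ f) (hf : LipschitzWith B f) {ε : ℝ} (hε : 0 < ε) :
    ∃ g : E → ℝ, ConvexOn ℝ Set.univ g ∧ ContDiff ℝ ∞ g ∧ (∃ C, LipschitzWith C g) ∧
      (∃ C, LipschitzWith C (fderiv ℝ g)) ∧ ∀ x, f x ≤ g x ∧ g x ≤ f x + ε := by
  borelize E
  let μ : Measure E := Measure.addHaar
  set r : ℝ := ε / (2 * (B + 1)) with hr
  have hr₀ : 0 < r := by positivity
  let φ : ContDiffBump (0 : E) := ⟨r / 2, r, half_pos hr₀, half_lt_self hr₀⟩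
  have hφ := φ.hasCompactSupport_normed (μ := μ)
  have hφ' : ContDiff ℝ ∞ (φ.normed μ) := φ.contDiff_normed
  let g := φ.normed μ ⋆[lsmul ℝ ℝ, μ] f
  have hfderiv : fderiv ℝ g = fderiv ℝ (φ.normed μ) ⋆[(lsmul ℝ ℝ).precompL E, μ] f :=
    funext fun x => (hφ.hasFDerivAt_convolution_left _ (hφ'.of_le (by simp))
      hf.continuous.locallyIntegrable x).fderiv
  have hfderiv_add : fderiv ℝ (fun x => g x + ε / 2) = fderiv ℝ g :=
    funext fun _ => fderiv_add_const _
  have hdist (x : E) : dist (g x) (f x) ≤ ε / 2 := by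
    refine φ.dist_normed_convolution_le hf.continuous.aestronglyMeasurable fun y hy => ?_
    calc dist (f y) (f x) ≤ B * r := hf.dist_le_mul_of_le (Metric.mem_ball.1 hy).le
      _ ≤ (B + 1) * r := by gcongr; simp
      _ = ε / 2 := by rw [hr]; field_simp
  refine ⟨fun x => g x + ε / 2, (convexOn_convolution_left hφ'.continuous hφ
      φ.nonneg_normed hconv hf.continuous).add_const _,
    (hφ.contDiff_convolution_left _ hφ' hf.continuous.locallyIntegrable).add contDiff_const,
    ⟨_, (lipschitzWith_convolution_left _ hφ'.continuous hφ hf).add (.const _)⟩, ?_,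
    fun x => ?_⟩
  · rw [hfderiv_add, hfderiv]
    exact ⟨_, lipschitzWith_convolution_left _ (hφ'.continuous_fderiv (by simp))
      (hφ.fderiv ℝ) hf⟩
  · have := abs_le.1 (Real.dist_eq _ _ ▸ hdist x)
    constructor <;> linarith

end SmoothConvexApproximation

section Conditioning

open Filter Topology MvPolynomial

theorem tendsto_integral_exp_neg_mul {X : Type*} [MeasurableSpace X] {μ : Measure X} {K : Set X}
    (hK : MeasurableSet K) {W : ℕ → X → ℝ} (hWm : ∀ m, AEStronglyMeasurable (W m) μ)
    (hW₀ : ∀ m x, 0 ≤ W m x) (hW_mem : ∀ x ∈ K, Tendsto (W · x) atTop (𝓝 0))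
    (hW_notMem : ∀ x ∉ K, Tendsto (W · x) atTop atTop) {f : X → ℝ} (hf : Integrable f μ) :
    Tendsto (fun m => ∫ x, Real.exp (-W m x) * f x ∂μ) atTop (𝓝 (∫ x in K, f x ∂μ)) := by
  rw [← integral_indicator hK]
  refine tendsto_integral_of_dominated_convergence (fun x => ‖f x‖)
    (fun m => (Real.continuous_exp.comp_aestronglyMeasurable (hWm m).neg).mul hf.1) hf.norm
    (fun m => .of_forall fun x => ?_) (.of_forall fun x => ?_)
  · rw [norm_mul, Real.norm_of_nonneg (Real.exp_nonneg _)]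
    exact mul_le_of_le_one_left (norm_nonneg _) (Real.exp_le_one_iff.2 (neg_nonpos.2 (hW₀ m x)))
  · by_cases hx : x ∈ K
    · rw [Set.indicator_of_mem hx]
      simpa using ((Real.continuous_exp.tendsto _).comp (hW_mem x hx).neg).mul_const (f x)
    · rw [Set.indicator_of_notMem hx]
      simpa using (Real.tendsto_exp_neg_atTop_nhds_zero.comp (hW_notMem x hx)).mul_const (f x)

theorem integral_cond {X : Type*} [MeasurableSpace X] (μ : Measure X) (K : Set X) (f : X → ℝ) :
    ∫ x, f x ∂(ProbabilityTheory.cond μ K) = (∫ x in K, f x ∂μ) / μ.real K := by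
  rw [ProbabilityTheory.cond, integral_smul_measure, ENNReal.toReal_inv, smul_eq_mul,
    div_eq_inv_mul, measureReal_def]

theorem HasExpMoments.cond {X : Type*} [NormedAddCommGroup X] [MeasurableSpace X] {μ : Measure X}
    [HasExpMoments μ] {K : Set X} (hK : μ K ≠ 0) :
    HasExpMoments (ProbabilityTheory.cond μ K) where
  integrable_exp c :=
    (HasExpMoments.integrable_exp c).restrict.smul_measure (ENNReal.inv_ne_top.2 hK)

theorem tendsto_integral_tilted_neg {X : Type*} [MeasurableSpace X] {μ : Measure X}
    [IsFiniteMeasure μ] {K : Set X} (hK : MeasurableSet K) (hμK : μ K ≠ 0) {W : ℕ → X → ℝ}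
    (hWm : ∀ m, AEStronglyMeasurable (W m) μ) (hW₀ : ∀ m x, 0 ≤ W m x)
    (hW_mem : ∀ x ∈ K, Tendsto (W · x) atTop (𝓝 0))
    (hW_notMem : ∀ x ∉ K, Tendsto (W · x) atTop atTop) {f : X → ℝ} (hf : Integrable f μ) :
    Tendsto (fun m => ∫ x, f x ∂μ.tilted fun x => -W m x) atTop
      (𝓝 (∫ x, f x ∂(ProbabilityTheory.cond μ K))) := by
  have hmass : Tendsto (fun m => ∫ x, Real.exp (-W m x) ∂μ) atTop (𝓝 (μ.real K)) := by
    simpa using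
      tendsto_integral_exp_neg_mul hK hWm hW₀ hW_mem hW_notMem (integrable_const (1 : ℝ))
  simp only [integral_tilted_eq_div, integral_cond]
  exact (tendsto_integral_exp_neg_mul hK hWm hW₀ hW_mem hW_notMem hf).div hmass
    ((measureReal_ne_zero_iff).2 hμK)

variable {ι : Type*} [Fintype ι]

theorem SecondOrderPoincare.of_tendsto {κ : Type*} {l : Filter κ} [l.NeBot]
    {μ : κ → Measure (ι → ℝ)} {ν : Measure (ι → ℝ)} (hμ : ∀ k, SecondOrderPoincare (μ k))
    (hlim : ∀ p, Tendsto (fun k => ∫ x, polyFun p x ∂μ k) l (𝓝 (∫ x, polyFun p x ∂ν))) :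
    SecondOrderPoincare ν := fun p =>
  le_of_tendsto_of_tendsto' ((hlim _).sub ((hlim p).pow 2))
    ((tendsto_finsetSum _ fun _ _ => (hlim _).add ((hlim _).pow 2)).div_const 2)
    fun k => hμ k p

theorem exists_smooth_convex_barrier {E : Type*} [NormedAddCommGroup E] [NormedSpace ℝ E]
    [FiniteDimensional ℝ E] {K : Set E} (hconv : Convex ℝ K) (hclosed : IsClosed K)
    (hne : K.Nonempty) : ∃ W : ℕ → E → ℝ,
      (∀ m, ConvexOn ℝ Set.univ (W m) ∧ ContDiff ℝ 2 (W m) ∧ (∃ C, LipschitzWith C (W m)) ∧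
        (∃ C, LipschitzWith C (fderiv ℝ (W m))) ∧ ∀ x, 0 ≤ W m x) ∧
      (∀ x ∈ K, Tendsto (W · x) atTop (𝓝 0)) ∧ ∀ x ∉ K, Tendsto (W · x) atTop atTop := by
  have happrox (m : ℕ) := exists_convexOn_contDiff_lipschitzWith_approx
    ((convexOn_infDist hconv hne).smul m.cast_nonneg)
    ((lipschitzWith_smul (m : ℝ)).comp (Metric.lipschitz_infDist_pt K))
    (Nat.one_div_pos_of_nat (α := ℝ) (n := m))
  choose W hW_conv hW_smooth hW_lip hW_lip' hW_near using happrox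
  refine ⟨W, fun m => ⟨hW_conv m, contDiff_infty.1 (hW_smooth m) 2, hW_lip m, hW_lip' m, fun x =>
    (mul_nonneg m.cast_nonneg Metric.infDist_nonneg).trans (hW_near m x).1⟩,
    fun x hx => ?_, fun x hx => ?_⟩
  · have hdist : Metric.infDist x K = 0 := Metric.infDist_zero_of_mem hx
    refine squeeze_zero (fun m => ?_) (fun m => ?_) tendsto_one_div_add_atTop_nhds_zero_nat
    · simpa [hdist] using (hW_near m x).1
    · simpa [hdist] using (hW_near m x).2
  · have hdist : 0 < Metric.infDist x K := (hclosed.notMem_iff_infDist_pos hne).1 hx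
    exact tendsto_atTop_mono (fun m => (hW_near m x).1)
      (tendsto_natCast_atTop_atTop.atTop_mul_const hdist)

theorem HasNegLogGradient.secondOrderPoincare_cond_of_isClosed [DecidableEq ι]
    {γ : Measure (ι → ℝ)} [HasExpMoments γ] (hγ : HasNegLogGradient γ fun i => polyFun (X i))
    {K : Set (ι → ℝ)} (hconv : Convex ℝ K) (hclosed : IsClosed K) (hγK : γ K ≠ 0) :
    SecondOrderPoincare (ProbabilityTheory.cond γ K) := by
  obtain ⟨W, hW, hW_mem, hW_notMem⟩ :=
    exists_smooth_convex_barrier hconv hclosed (nonempty_of_measure_ne_zero hγK)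
  have : NeZero γ := ⟨fun h => hγK (by simp [h])⟩
  refine .of_tendsto (μ := fun m => γ.tilted fun x => -W m x) (fun m => ?_) fun p =>
    tendsto_integral_tilted_neg hclosed.measurableSet hγK
      (fun m => (hW m).2.1.continuous.aestronglyMeasurable) (fun m => (hW m).2.2.2.2)
      hW_mem hW_notMem (expGrowth.integrable (polyFun p) γ)
  obtain ⟨hWconv, hWdiff, ⟨_, hLip⟩, ⟨_, hLip'⟩, hW₀⟩ := hW m
  exact hγ.secondOrderPoincare_tilted_of_convexOn hWconv hWdiff hLip hLip' hW₀

theorem secondOrderPoincare_cond_stdGaussianPi {K : Set (ι → ℝ)} (hconv : Convex ℝ K)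
    (hK : stdGaussianPi ι K ≠ 0) :
    SecondOrderPoincare (ProbabilityTheory.cond (stdGaussianPi ι) K) := by
  classical
  have hac : stdGaussianPi ι ≪ volume := by
    rw [stdGaussianPi_eq_withDensity]
    exact withDensity_absolutelyContinuous _ _
  have hclosure : K =ᵐ[stdGaussianPi ι] closure K :=
    hac.ae_eq (closure_ae_eq_of_null_frontier (hconv.addHaar_frontier volume)).symm
  have hcond : ProbabilityTheory.cond (stdGaussianPi ι) K
      = ProbabilityTheory.cond (stdGaussianPi ι) (closure K) := by
    rw [ProbabilityTheory.cond, ProbabilityTheory.cond, measure_congr hclosure,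
      Measure.restrict_congr_set hclosure]
  rw [hcond]
  exact (hasNegLogGradient_stdGaussianPi ι).secondOrderPoincare_cond_of_isClosed hconv.closure
    isClosed_closure (measure_congr hclosure ▸ hK)

theorem stdGaussianPi_ne_zero_of_nonempty_interior {K : Set (ι → ℝ)}
    (hK : (interior K).Nonempty) : stdGaussianPi ι K ≠ 0 := by
  have : (ProbabilityTheory.gaussianReal 0 1).IsOpenPosMeasure :=
    (ProbabilityTheory.gaussianReal_absolutelyContinuous' 0 one_ne_zero).isOpenPosMeasure
  exact (Measure.measure_pos_of_nonempty_interior _ hK).ne'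

theorem SecondOrderPoincare.integral_sum_sq_sq_sub_le {μ : Measure (ι → ℝ)} [HasExpMoments μ]
    (h : SecondOrderPoincare μ) :
    ∫ x, (∑ i, x i ^ 2) ^ 2 ∂μ - (∫ x, ∑ i, x i ^ 2 ∂μ) ^ 2
      ≤ 2 * ∫ x, ∑ i, x i ^ 2 ∂μ + 2 * ∑ i, (∫ x, x i ∂μ) ^ 2 := by
  classical
  have hint (i : ι) : Integrable (fun x : ι → ℝ => x i ^ 2) μ :=
    (expGrowth.integrable (polyFun (X i ^ 2)) μ).congr <|
      .of_forall fun x => (polyFun_apply _ _).trans (by simp)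
  have hvar := h (∑ j, X j ^ 2)
  simp only [pderiv_sum_X_sq, polyFun_apply, eval_pow, eval_sum, eval_mul, eval_X, eval_C, mul_pow,
    integral_const_mul] at hvar
  refine hvar.trans_eq ?_
  rw [integral_finsetSum _ fun i _ => hint i, Finset.sum_add_distrib, ← Finset.mul_sum,
    ← Finset.mul_sum]
  ring

end Conditioning

theorem stmt_16_general {ι : Type*} [Fintype ι] (K : Set (ι → ℝ)) (hKconv : Convex ℝ K)
    (hKint : (interior K).Nonempty) (γ : Measure (ι → ℝ))
    (hγ : γ = Measure.pi fun _ : ι => ProbabilityTheory.gaussianReal 0 1)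
    (hbary : ∀ i, ∫ x in K, x i ∂γ = 0) :
    (∫ x in K, (∑ i, x i ^ 2) ^ 2 ∂γ)
        - (1 / (γ K).toReal) * (∫ x in K, (∑ i, x i ^ 2) ∂γ) ^ 2
        - 2 * ∫ x in K, (∑ i, x i ^ 2) ∂γ ≤ 0 := by
  subst hγ
  have hK := stdGaussianPi_ne_zero_of_nonempty_interior hKint
  have hpos : 0 < (stdGaussianPi ι).real K := ENNReal.toReal_pos hK (measure_ne_top _ _)
  have := HasExpMoments.cond hK
  have hvar := (secondOrderPoincare_cond_stdGaussianPi hKconv hK).integral_sum_sq_sq_sub_le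
  simp only [integral_cond, hbary, zero_div, zero_pow two_ne_zero, Finset.sum_const_zero,
    mul_zero, add_zero] at hvar
  rw [← measureReal_def]
  field_simp at hvar ⊢
  linarith

/-- CFM inequality: for the standard Gaussian `γ` and a convex body `K` with Gaussian
barycenter at the origin,
`∫_K |x|⁴ dγ − (1/γ(K))(∫_K |x|² dγ)² − 2∫_K |x|² dγ ≤ 0`. -/
theorem stmt_16 (n : ℕ) (K : Set (Fin n → ℝ))
    (hKconv : Convex ℝ K) (hKc : IsCompact K) (hKint : (interior K).Nonempty)
    (γ : Measure (Fin n → ℝ))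
    (hγ : γ = Measure.pi fun _ : Fin n => ProbabilityTheory.gaussianReal 0 1)
    (hbary : ∀ i : Fin n, ∫ x in K, x i ∂γ = 0) :
    (∫ x in K, (∑ i, x i ^ 2) ^ 2 ∂γ)
        - (1 / (γ K).toReal) * (∫ x in K, (∑ i, x i ^ 2) ∂γ) ^ 2
        - 2 * ∫ x in K, (∑ i, x i ^ 2) ∂γ ≤ 0 :=
  stmt_16_general K hKconv hKint γ hγ hbary
end
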